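/- For every k ≥ 1 and all unary relations U₁,...,U_k ⊆ ℕ, there exists a strict linear order ◁' on ℕ such that the relation ◁ and each of the relations U₁,...,U_k are FO(<,◁')-definable in every finite prefix. Moreover, if each Uᵢ is FO(Bit)-definable in every finite prefix, then ◁' can be chosen to be FO(Bit)-definable in every finite prefix. -/

import Mathlib

open FirstOrder Language

/-- `q_i = i(i+1)/2`, the smallest element of column `i`. -/
def qseq (i : ℕ) : ℕ := i * (i + 1) / 2

/-- `c(x)`, the column number of `x`: the largest `i` with `q_i ≤ x`. -/
def col (x : ℕ) : ℕ := Nat.findGreatest (fun i => qseq i ≤ x) x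

/-- `q(x) = q_{c(x)}`, the bottom-most element of the column of `x`. -/
def qf (x : ℕ) : ℕ := qseq (col x)

/-- `r(x) = x - q(x)`, the row number of `x`. -/
def rowf (x : ℕ) : ℕ := x - qf x

/-- The row-major linear order `◁`. -/
def ordc (x y : ℕ) : Prop := rowf x < rowf y ∨ (rowf x = rowf y ∧ col x < col y)

/-- Relation symbols of the language with a single binary relation `Bit`. -/
inductive BitRel : ℕ → Type
  | bit : BitRel 2

/-- The language with a single binary relation symbol for `Bit`. -/
def LBit : Language := ⟨fun _ => Empty, BitRel⟩

/-- The finite prefix structure `({0,...,n}, Bit)`. -/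
def bitStruct (n : ℕ) : LBit.Structure (Fin (n + 1)) where
  funMap := fun f _ => f.elim
  RelMap := fun r v =>
    match r with
    | .bit => Nat.testBit (v 0 : ℕ) (v 1 : ℕ) = true

/-- Relation symbols of a language with two binary relation symbols. -/
inductive RelPair : ℕ → Type
  | lt : RelPair 2
  | snd : RelPair 2

/-- A language with two binary relation symbols: one for `<` and one further one. -/
def LPair : Language := ⟨fun _ => Empty, RelPair⟩

/-- The finite prefix structure `({0,...,n}, <, R)`, interpreting the first symbol by
the standard order `<` and the second one by the binary relation `R`. -/
def pairStruct (R : ℕ → ℕ → Prop) (n : ℕ) : LPair.Structure (Fin (n + 1)) where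
  funMap := fun f _ => f.elim
  RelMap := fun r v =>
    match r with
    | .lt => (v 0 : ℕ) < (v 1 : ℕ)
    | .snd => R (v 0 : ℕ) (v 1 : ℕ)

/-!
Color every number `x` by the code `e x < M = 2 ^ k` of the sets `U i` that contain it. The first
`M` elements of each row, its leaders, stand for the `M` colors. The order `◁'` groups every other
element behind the leader in its row that stands for its color, and the level in which a group is
placed records the color of the leader itself. The levels are separated by `M` markers, finitely
many numbers that a formula can name.

*Decoding with `<` and `◁'`.* In a level the groups come in decreasing order of their leaders, so
the leader of `x` is the least number of the level that does not come after `x`. The leaders occupy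
the top of each column, so a column ends where a run of leaders ends. This recovers the columns,
then the distance of a leader from the head of its row, hence rows and colors.

*Defining `◁'` from `Bit`.* It suffices to define `<` and multiplication. Numbers code sets of
numbers, and a code of the initial segments of `{0, ..., b}` yields `<` for numbers of order
`log log n`; comparing binary representations turns `<` below `m` into `<` below `2 ^ m`, so three
rounds reach `n`. Addition is carry propagation. Multiplication needs recursions of length
`3 * log n`; these are checked by two nested sequences of square-root length, whose values fit into
the binary digits of a number `≤ n`.
-/

/-- A predicate `P n v` on assignments `v : α → ℕ`, which may also mention the prefix size `n`, is
definable over the structures `S n` on `{0, ..., n}` if one formula with free variables in `α`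
expresses `P n` in `S n` for every `n`. -/
def PrefixDefinable {L : Language} (S : ∀ n, L.Structure (Fin (n + 1))) {α : Type*}
    (P : ℕ → (α → ℕ) → Prop) : Prop :=
  ∃ φ : L.Formula α, ∀ (n : ℕ) (v : α → Fin (n + 1)),
    letI := S n
    φ.Realize v ↔ P n fun a => v a

namespace PrefixDefinable

section Connectives

variable {L : Language} {S : ∀ n, L.Structure (Fin (n + 1))} {α β : Type*}
  {P Q : ℕ → (α → ℕ) → Prop}

theorem of_iff (hP : PrefixDefinable S P) (h : ∀ n v, (∀ a, v a ≤ n) → (Q n v ↔ P n v)) :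
    PrefixDefinable S Q := by
  obtain ⟨φ, hφ⟩ := hP
  exact ⟨φ, fun n v => (hφ n v).trans (h n _ fun a => Nat.lt_succ_iff.mp (v a).2).symm⟩

theorem rename {P : ℕ → (β → ℕ) → Prop} (hP : PrefixDefinable S P) (f : β → α) :
    PrefixDefinable S fun n v => P n fun b => v (f b) := by
  obtain ⟨φ, hφ⟩ := hP
  refine ⟨φ.relabel f, fun n v => ?_⟩
  let := S n
  exact Formula.realize_relabel.trans (hφ n _)

theorem not (hP : PrefixDefinable S P) : PrefixDefinable S fun n v => ¬ P n v := by
  obtain ⟨φ, hφ⟩ := hP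
  refine ⟨∼φ, fun n v => ?_⟩
  let := S n
  exact Formula.realize_not.trans (not_congr (hφ n v))

theorem and (hP : PrefixDefinable S P) (hQ : PrefixDefinable S Q) :
    PrefixDefinable S fun n v => P n v ∧ Q n v := by
  obtain ⟨φ, hφ⟩ := hP
  obtain ⟨ψ, hψ⟩ := hQ
  refine ⟨φ ⊓ ψ, fun n v => ?_⟩
  let := S n
  exact Formula.realize_inf.trans (and_congr (hφ n v) (hψ n v))

theorem or (hP : PrefixDefinable S P) (hQ : PrefixDefinable S Q) :
    PrefixDefinable S fun n v => P n v ∨ Q n v :=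
  (hP.not.and hQ.not).not.of_iff fun _ _ _ => by tauto

theorem imp (hP : PrefixDefinable S P) (hQ : PrefixDefinable S Q) :
    PrefixDefinable S fun n v => P n v → Q n v :=
  (hP.not.or hQ).of_iff fun _ _ _ => imp_iff_not_or

theorem iff (hP : PrefixDefinable S P) (hQ : PrefixDefinable S Q) :
    PrefixDefinable S fun n v => P n v ↔ Q n v :=
  ((hP.imp hQ).and (hQ.imp hP)).of_iff fun _ _ _ => iff_iff_implies_and_implies

theorem exists_le {P : ℕ → (α → ℕ) → ℕ → Prop}
    (hP : PrefixDefinable (α := Option α) S fun n w => P n (fun a => w (some a)) (w none)) :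
    PrefixDefinable S fun n v => ∃ z ≤ n, P n v z := by
  obtain ⟨φ, hφ⟩ := hP
  refine ⟨(φ.relabel fun o : Option α => (o.elim (Sum.inr ()) Sum.inl : α ⊕ Unit)).iExs Unit,
    fun n v => ?_⟩
  let := S n
  rw [Formula.realize_iExs]
  constructor
  · rintro ⟨i, hi⟩
    rw [Formula.realize_relabel] at hi
    exact ⟨i (), Nat.lt_succ_iff.mp (i ()).2, (hφ n _).1 hi⟩
  · rintro ⟨z, hz, hPz⟩
    refine ⟨fun _ => ⟨z, Nat.lt_succ_iff.mpr hz⟩, ?_⟩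
    rw [Formula.realize_relabel]
    exact (hφ n _).2 hPz

theorem forall_le {P : ℕ → (α → ℕ) → ℕ → Prop}
    (hP : PrefixDefinable (α := Option α) S fun n w => P n (fun a => w (some a)) (w none)) :
    PrefixDefinable S fun n v => ∀ z ≤ n, P n v z :=
  (exists_le (P := fun n v z => ¬ P n v z) hP.not).not.of_iff fun _ _ _ => by push Not; rfl

theorem eq (a b : α) : PrefixDefinable S fun _ v => v a = v b := by
  refine ⟨(Term.var a).equal (Term.var b), fun n v => ?_⟩
  let := S n
  rw [Formula.realize_equal]
  exact Fin.ext_iff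

theorem rel₂ (R : L.Relations 2) {r : ℕ → ℕ → Prop}
    (hR : ∀ n (w : Fin 2 → Fin (n + 1)),
      @Structure.RelMap L _ (S n) 2 R w ↔ r (w 0) (w 1)) (a b : α) :
    PrefixDefinable S fun _ v => r (v a) (v b) := by
  refine ⟨R.formula₂ (Term.var a) (Term.var b), fun n v => ?_⟩
  let := S n
  exact Formula.realize_rel₂.trans (hR n _)

theorem iExists {ι : Type*} [Finite ι] {P : ι → ℕ → (α → ℕ) → Prop}
    (hP : ∀ i, PrefixDefinable S (P i)) : PrefixDefinable S fun n v => ∃ i, P i n v := by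
  choose φ hφ using hP
  refine ⟨BoundedFormula.iSup φ, fun n v => ?_⟩
  let := S n
  exact BoundedFormula.realize_iSup.trans (exists_congr fun i => hφ i n v)

theorem iForall {ι : Type*} [Finite ι] {P : ι → ℕ → (α → ℕ) → Prop}
    (hP : ∀ i, PrefixDefinable S (P i)) : PrefixDefinable S fun n v => ∀ i, P i n v :=
  (iExists fun i => (hP i).not).not.of_iff fun _ _ _ => by push Not; rfl

theorem const (p : Prop) : PrefixDefinable S fun _ (_ : α → ℕ) => p :=
  have hFalse : PrefixDefinable S fun _ (_ : α → ℕ) => False :=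
    (iExists (P := fun (i : Empty) _ _ => i.elim) fun i => i.elim).of_iff fun _ _ _ => by simp
  (em p).elim (fun hp => hFalse.not.of_iff fun _ _ _ => by simp [hp])
    fun hp => hFalse.of_iff fun _ _ _ => by simp [hp]

theorem exists_lt (N : ℕ) {P : ℕ → ℕ → (α → ℕ) → Prop} (hP : ∀ i, PrefixDefinable S (P i)) :
    PrefixDefinable S fun n v => ∃ i < N, P i n v :=
  (iExists (ι := Fin N) fun i => hP i).of_iff fun _ _ _ => Fin.exists_iff.trans (by simp) |>.symm

theorem subst {f : ℕ → ℕ} (hf : PrefixDefinable S fun _ (v : Fin 2 → ℕ) => v 1 = f (v 0))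
    (hle : ∀ x, f x ≤ x) {P : ℕ → (α → ℕ) → ℕ → Prop} (a : α)
    (hP : PrefixDefinable (α := Option α) S fun n w => P n (fun a => w (some a)) (w none)) :
    PrefixDefinable S fun n v => P n v (f (v a)) := by
  have hgraph : PrefixDefinable (α := Option α) S fun _ w => w none = f (w (some a)) :=
    hf.rename ![some a, none]
  refine (exists_le (P := fun n v z => z = f (v a) ∧ P n v z) (hgraph.and hP)).of_iff
    fun n v hv => ⟨fun h => ⟨f (v a), (hle _).trans (hv a), rfl, h⟩, ?_⟩
  rintro ⟨_, _, rfl, h⟩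
  exact h

theorem iff_exists_formula₁ {P : ℕ → Prop} :
    (PrefixDefinable S fun _ (v : Fin 1 → ℕ) => P (v 0)) ↔
      ∃ φ : L.Formula (Fin 1), ∀ n : ℕ, letI := S n
        ∀ a : Fin (n + 1), φ.Realize ![a] ↔ P a :=
  exists_congr fun _ => forall_congr' fun _ =>
    ⟨fun h a => h ![a], fun h v => (List.ofFn_inj.mp rfl : ![v 0] = v) ▸ h (v 0)⟩

theorem iff_exists_formula₂ {R : ℕ → ℕ → Prop} :
    (PrefixDefinable S fun _ (v : Fin 2 → ℕ) => R (v 0) (v 1)) ↔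
      ∃ φ : L.Formula (Fin 2), ∀ n : ℕ, letI := S n
        ∀ a b : Fin (n + 1), φ.Realize ![a, b] ↔ R a b :=
  exists_congr fun _ => forall_congr' fun _ =>
    ⟨fun h a b => h ![a, b], fun h v => (List.ofFn_inj.mp rfl : ![v 0, v 1] = v) ▸ h (v 0) (v 1)⟩

end Connectives

end PrefixDefinable

/-- The standard order `<` is definable over the prefix structures `S`. -/
class DefinesLT {L : Language} (S : ∀ n, L.Structure (Fin (n + 1))) : Prop where
  prefixDefinable_lt : PrefixDefinable S fun _ (v : Fin 2 → ℕ) => v 0 < v 1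

namespace PrefixDefinable

section Order

variable {L : Language} {S : ∀ n, L.Structure (Fin (n + 1))} [DefinesLT S] {α : Type*}

theorem lt (a b : α) : PrefixDefinable S fun _ v => v a < v b :=
  DefinesLT.prefixDefinable_lt.rename ![a, b]

theorem le (a b : α) : PrefixDefinable S fun _ v => v a ≤ v b :=
  (lt b a).not.of_iff fun _ _ _ => not_lt.symm

theorem eq_const (a : α) (c : ℕ) : PrefixDefinable S fun _ v => v a = c := by
  induction c using Nat.strong_induction_on generalizing α with
  | _ c ih =>
    have h : PrefixDefinable S fun n v =>
        (∀ i : Fin c, v a ≠ i) ∧ ∀ z ≤ n, z < v a → ∃ i : Fin c, z = i :=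
      and (iForall fun i => (ih i i.2 a).not)
        (forall_le (imp (lt _ _) (iExists fun i => ih i i.2 _)))
    refine h.of_iff fun n v hv => ⟨?_, fun ⟨hne, hlt⟩ => ?_⟩
    · rintro h
      exact ⟨fun i => by omega, fun z _ hz => ⟨⟨z, by omega⟩, rfl⟩⟩
    · have hc : c ≤ v a := not_lt.mp fun hc => hne ⟨v a, hc⟩ rfl
      refine hc.antisymm' (not_lt.mp fun hca => ?_)
      obtain ⟨i, hi⟩ := hlt c (hc.trans (hv a)) hca
      omega

theorem add_const (a b : α) (c : ℕ) : PrefixDefinable S fun _ v => v a + c = v b := by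
  induction c generalizing α with
  | zero => exact eq a b
  | succ c ih =>
    have h : PrefixDefinable S fun n v => ∃ z ≤ n, v a + c = z ∧ z < v b ∧
        ¬ ∃ w ≤ n, z < w ∧ w < v b :=
      exists_le (and (ih _ _) (and (lt _ _) (not (exists_le (and (lt _ _) (lt _ _))))))
    refine h.of_iff fun n v hv => ⟨fun h => ?_, ?_⟩
    · have := hv b
      refine ⟨v a + c, by omega, rfl, by omega, ?_⟩
      rintro ⟨w, _, _, _⟩
      omega
    · rintro ⟨z, _, rfl, hlt, hno⟩
      have := hv b
      exact le_antisymm hlt (not_lt.mp fun h => hno ⟨v a + c + 1, by omega, by omega, h⟩)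

theorem lt_const (a : α) (c : ℕ) : PrefixDefinable S fun _ v => v a < c :=
  (exists_lt c fun i => eq_const a i).of_iff fun _ _ _ => by simp

theorem size_eq_const (c : ℕ) : PrefixDefinable S fun n (_ : α → ℕ) => n = c := by
  have h : PrefixDefinable S fun n (_ : α → ℕ) => ∃ z ≤ n, z = c ∧ ∀ w ≤ n, w ≤ z :=
    exists_le (and (eq_const _ _) (forall_le (le _ _)))
  refine h.of_iff fun n v _ => ⟨fun h => ⟨n, le_rfl, h, fun _ => id⟩, ?_⟩
  rintro ⟨z, hz, rfl, hmax⟩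
  exact le_antisymm (hmax n le_rfl) hz

theorem of_eventually_iff [Finite α] (N : ℕ) {P Q : ℕ → (α → ℕ) → Prop}
    (hQ : PrefixDefinable S Q)
    (h : ∀ n v, N ≤ n → (∀ a, v a ≤ n) → (P n v ↔ Q n v)) : PrefixDefinable S P := by
  have hcases : PrefixDefinable S fun n v => ((∀ i : Fin N, ¬ n = i) ∧ Q n v) ∨
      ∃ i : Fin N, n = i ∧ ∃ w : α → Fin N, P i (fun a => w a) ∧ ∀ a, v a = w a :=
    or (and (iForall fun _ => (size_eq_const _).not) hQ)
      (iExists fun _ => and (size_eq_const _)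
        (iExists fun _ => and (const _) (iForall fun _ => eq_const _ _)))
  refine hcases.of_iff fun n v hv => ?_
  by_cases hn : N ≤ n
  · refine (h n v hn hv).trans ⟨fun hq => Or.inl ⟨fun i => by omega, hq⟩, ?_⟩
    rintro (⟨_, hq⟩ | ⟨i, rfl, _⟩)
    · exact hq
    · exact absurd i.2 hn.not_gt
  · refine ⟨fun hp => Or.inr ⟨⟨n, not_le.mp hn⟩, rfl, fun a => ⟨v a, ?_⟩, hp, fun _ => rfl⟩, ?_⟩
    · exact (hv a).trans_lt (not_le.mp hn)
    · rintro (⟨hne, _⟩ | ⟨i, rfl, w, hw, hvw⟩)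
      · exact absurd rfl (hne ⟨n, not_le.mp hn⟩)
      · rwa [funext hvw]

theorem cases_lt_const (a : α) (N : ℕ) {P Q : ℕ → (α → ℕ) → Prop} {R : ℕ → ℕ → (α → ℕ) → Prop}
    (hQ : PrefixDefinable S Q) (hR : ∀ i, PrefixDefinable S (R i))
    (hlarge : ∀ n v, (∀ b, v b ≤ n) → N ≤ v a → (P n v ↔ Q n v))
    (hsmall : ∀ n v, (∀ b, v b ≤ n) → v a < N → (P n v ↔ R (v a) n v)) :
    PrefixDefinable S P := by
  have h : PrefixDefinable S fun n v => (¬ v a < N ∧ Q n v) ∨ ∃ i < N, v a = i ∧ R i n v :=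
    or (and (lt_const _ _).not hQ) (exists_lt N fun i => and (eq_const _ _) (hR i))
  refine h.of_iff fun n v hv => ?_
  by_cases ha : v a < N
  · simp [ha, hsmall n v hv ha]
  · simp only [ha, hlarge n v hv (not_lt.mp ha), not_false_eq_true, true_and, iff_self_or]
    rintro ⟨i, hi, rfl, _⟩
    exact absurd hi ha

end Order

end PrefixDefinable

instance definesLT_pairStruct (R : ℕ → ℕ → Prop) : DefinesLT (pairStruct R) :=
  ⟨PrefixDefinable.rel₂ (L := LPair) RelPair.lt (fun _ _ => Iff.rfl) 0 1⟩

theorem prefixDefinable_pairStruct_snd (R : ℕ → ℕ → Prop) {α : Type*} (a b : α) :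
    PrefixDefinable (pairStruct R) fun _ v => R (v a) (v b) :=
  PrefixDefinable.rel₂ (L := LPair) RelPair.snd (fun _ _ => Iff.rfl) a b

section Grid

theorem qseq_succ (i : ℕ) : qseq (i + 1) = qseq i + i + 1 := by
  have h : (i + 1) * (i + 1 + 1) = i * (i + 1) + 2 * (i + 1) := by ring
  unfold qseq
  omega

theorem qseq_mono : Monotone qseq :=
  monotone_nat_of_le_succ fun i => by rw [qseq_succ]; omega

theorem qseq_add_lt_of_lt {c d r : ℕ} (hr : r ≤ c) (hcd : c < d) : qseq c + r < qseq d := by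
  have h := qseq_mono hcd
  rw [Nat.succ_eq_add_one, qseq_succ] at h
  omega

theorem self_le_qseq (i : ℕ) : i ≤ qseq i := by
  induction i with
  | zero => exact Nat.zero_le _
  | succ i ih => rw [qseq_succ]; omega

theorem le_col_iff {x c : ℕ} : c ≤ col x ↔ qseq c ≤ x :=
  ⟨fun h => (qseq_mono h).trans (Nat.findGreatest_spec (P := fun i => qseq i ≤ x)
    (Nat.zero_le x) (Nat.zero_le x)), fun h => Nat.le_findGreatest ((self_le_qseq c).trans h) h⟩

theorem qseq_col_add_rowf (x : ℕ) : qseq (col x) + rowf x = x :=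
  Nat.add_sub_cancel' (le_col_iff.mp le_rfl)

theorem rowf_le_col (x : ℕ) : rowf x ≤ col x := by
  have h := mt le_col_iff.mpr (Nat.not_succ_le_self (col x))
  have := qseq_col_add_rowf x
  rw [Nat.succ_eq_add_one, qseq_succ] at h
  omega

theorem col_qseq_add {c r : ℕ} (h : r ≤ c) : col (qseq c + r) = c :=
  le_antisymm (Nat.lt_succ_iff.mp (lt_of_not_ge fun hlt =>
      (qseq_add_lt_of_lt h c.lt_succ_self).not_ge (le_col_iff.mp hlt)))
    (le_col_iff.mpr (Nat.le_add_right _ _))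

theorem rowf_qseq_add {c r : ℕ} (h : r ≤ c) : rowf (qseq c + r) = r := by
  rw [rowf, qf, col_qseq_add h, Nat.add_sub_cancel_left]

theorem col_mono : Monotone col :=
  fun _ _ h => le_col_iff.mpr ((le_col_iff.mp le_rfl).trans h)

theorem eq_of_col_eq_of_rowf_eq {x y : ℕ} (hc : col x = col y) (hr : rowf x = rowf y) : x = y := by
  rw [← qseq_col_add_rowf x, ← qseq_col_add_rowf y, hc, hr]

theorem col_add_of_le {x k : ℕ} (h : rowf x + k ≤ col x) :
    col (x + k) = col x ∧ rowf (x + k) = rowf x + k := by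
  have hx : x + k = qseq (col x) + (rowf x + k) := by rw [← add_assoc, qseq_col_add_rowf]
  exact ⟨hx ▸ col_qseq_add h, hx ▸ rowf_qseq_add h⟩

theorem col_succ_of_rowf_eq_col {x : ℕ} (h : rowf x = col x) :
    col (x + 1) = col x + 1 ∧ rowf (x + 1) = 0 := by
  have hx : x + 1 = qseq (col x + 1) + 0 := by
    have := qseq_col_add_rowf x
    rw [qseq_succ]
    omega
  exact ⟨hx ▸ col_qseq_add (Nat.zero_le _), hx ▸ rowf_qseq_add (Nat.zero_le _)⟩

theorem col_lt_col_iff {x y : ℕ} : col x < col y ↔ ∃ z ≤ y, x < z ∧ rowf z = 0 := by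
  constructor
  · intro h
    refine ⟨qseq (col y) + 0, le_col_iff.mp le_rfl, ?_, rowf_qseq_add (Nat.zero_le _)⟩
    rw [← qseq_col_add_rowf x]
    exact qseq_add_lt_of_lt (rowf_le_col x) h
  · rintro ⟨z, hzy, hxz, hz⟩
    refine (lt_of_not_ge fun hzx => hxz.not_ge ?_).trans_le (col_mono hzy)
    rw [← qseq_col_add_rowf z, hz]
    exact le_col_iff.mp hzx

theorem col_succ_eq_col_iff {x y : ℕ} :
    col x + 1 = col y ↔ col x < col y ∧ ∀ z ≤ y, ¬ (col x < col z ∧ col z < col y) := by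
  refine ⟨fun h => ⟨by omega, by omega⟩, fun ⟨hlt, hno⟩ => le_antisymm hlt (not_lt.mp fun h => ?_)⟩
  have hc : col (qseq (col x + 1) + 0) = col x + 1 := col_qseq_add (Nat.zero_le _)
  exact hno _ (le_col_iff.mp h.le) ⟨hc.symm ▸ Nat.lt_succ_self _, hc.symm ▸ h⟩

theorem col_add_succ_eq_col_iff {x y j : ℕ} :
    col x + (j + 1) = col y ↔ ∃ w ≤ y, col x + j = col w ∧ col w + 1 = col y := by
  refine ⟨fun h => ?_, by omega⟩
  have hc : col (qseq (col x + j)) = col x + j := col_qseq_add (Nat.zero_le _)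
  exact ⟨_, le_col_iff.mp (by omega), hc.symm, by omega⟩

/-- The element on the diagonal of the grid in the row of `x`, which is the first element of that
row. -/
def rowHead (x : ℕ) : ℕ := qseq (rowf x) + rowf x

theorem rowHead_le (x : ℕ) : rowHead x ≤ x :=
  (Nat.add_le_add_right (qseq_mono (rowf_le_col x)) _).trans_eq (qseq_col_add_rowf x)

theorem rowHead_strictMono : StrictMono fun r => qseq r + r :=
  fun _ _ h => Nat.add_lt_add_of_le_of_lt (qseq_mono h.le) h

theorem rowf_lt_rowf_iff {x y : ℕ} : rowf x < rowf y ↔ rowHead x < rowHead y :=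
  rowHead_strictMono.lt_iff_lt.symm

theorem eq_rowHead_iff {x s : ℕ} : s = rowHead x ↔ col s = rowf s ∧ rowf s = rowf x := by
  have hcol : col (rowHead x) = rowf x := col_qseq_add le_rfl
  have hrow : rowf (rowHead x) = rowf x := rowf_qseq_add le_rfl
  refine ⟨fun h => by simp [h, hcol, hrow], fun h => eq_of_col_eq_of_rowf_eq ?_ ?_⟩ <;> omega

end Grid

section EncodingOrder

variable (M : ℕ) (e : ℕ → ℕ)

/-- The markers are the bottom elements of the columns `M, ..., 2M - 1`; they separate the levels
of `encodingOrder`. -/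
def IsMarker (x : ℕ) : Prop := rowf x = 0 ∧ M ≤ col x ∧ col x < 2 * M

/-- The leaders of a row are its first `M` elements, one for each color `e x < M`. Since row `r`
starts in column `r`, the leader of color `i` has column `r + i`. -/
def IsLeader (x : ℕ) : Prop := col x < rowf x + M

open Classical in
/-- The leader of `x` is the element of the row of `x` that records the color `e x`; markers and
leaders are their own leaders. -/
noncomputable def leader (x : ℕ) : ℕ :=
  if IsMarker M x ∨ IsLeader M x then x else qseq (rowf x + e x) + rowf x

open Classical in
/-- The levels of `encodingOrder`: each even level `2 * i` consists of one marker, each odd level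
`2 * i + 1` of the elements whose leader has color `i`. -/
noncomputable def level (x : ℕ) : ℕ :=
  if IsMarker M x then 2 * (col x - M) else 2 * e (leader M e x) + 1

/-- The order encoding the grid and the coloring `e`: levels in increasing order, within a level
the elements grouped by their leaders in decreasing order of the leaders, and each group in its
natural order. -/
def encodingOrder (x y : ℕ) : Prop :=
  level M e x < level M e y ∨ level M e x = level M e y ∧
    (leader M e y < leader M e x ∨ leader M e x = leader M e y ∧ x < y)

theorem encodingOrder_irrefl (x : ℕ) : ¬ encodingOrder M e x x := by
  unfold encodingOrder
  omega

variable {M e}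

theorem encodingOrder_trans {x y z : ℕ} (hxy : encodingOrder M e x y)
    (hyz : encodingOrder M e y z) : encodingOrder M e x z := by
  unfold encodingOrder at *
  omega

theorem encodingOrder_total {x y : ℕ} (h : x ≠ y) :
    encodingOrder M e x y ∨ encodingOrder M e y x := by
  unfold encodingOrder
  omega

theorem IsLeader.not_isMarker {x : ℕ} (h : IsLeader M x) : ¬ IsMarker M x := by
  unfold IsLeader at h
  unfold IsMarker
  omega

theorem IsMarker.lt_qseq {x : ℕ} (h : IsMarker M x) : x < qseq (2 * M) :=
  lt_of_not_ge fun hx => h.2.2.not_ge (le_col_iff.mpr hx)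

theorem isMarker_qseq_add {j : ℕ} (hj : j < M) : IsMarker M (qseq (M + j)) := by
  have hc : col (qseq (M + j)) = M + j := col_qseq_add (Nat.zero_le _)
  exact ⟨rowf_qseq_add (Nat.zero_le _), by omega, by omega⟩

theorem level_qseq_add {j : ℕ} (hj : j < M) : level M e (qseq (M + j)) = 2 * j := by
  have hc : col (qseq (M + j)) = M + j := col_qseq_add (Nat.zero_le _)
  rw [level, if_pos (isMarker_qseq_add hj), hc, Nat.add_sub_cancel_left]

theorem IsLeader.leader_eq {x : ℕ} (h : IsLeader M x) : leader M e x = x := if_pos (Or.inr h)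

theorem IsMarker.leader_eq {x : ℕ} (h : IsMarker M x) : leader M e x = x := if_pos (Or.inl h)

theorem leader_of_not {x : ℕ} (hm : ¬ IsMarker M x) (hl : ¬ IsLeader M x) :
    leader M e x = qseq (rowf x + e x) + rowf x := if_neg (not_or.mpr ⟨hm, hl⟩)

theorem rowf_leader (x : ℕ) : rowf (leader M e x) = rowf x := by
  unfold leader
  split_ifs
  · rfl
  · exact rowf_qseq_add (Nat.le_add_right _ _)

theorem col_leader_of_not {x : ℕ} (hm : ¬ IsMarker M x) (hl : ¬ IsLeader M x) :
    col (leader M e x) = rowf x + e x :=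
  leader_of_not hm hl ▸ col_qseq_add (Nat.le_add_right _ _)

theorem isLeader_leader (he : ∀ x, e x < M) {x : ℕ} (hm : ¬ IsMarker M x) :
    IsLeader M (leader M e x) := by
  by_cases hl : IsLeader M x
  · rwa [hl.leader_eq]
  · rw [IsLeader, col_leader_of_not hm hl, rowf_leader]
    exact Nat.add_lt_add_left (he x) _

theorem leader_lt_of_not (he : ∀ x, e x < M) {x : ℕ} (hm : ¬ IsMarker M x)
    (hl : ¬ IsLeader M x) : leader M e x < x := by
  have hcol : rowf x + e x < col x :=
    (Nat.add_lt_add_left (he x) _).trans_le (not_lt.mp hl)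
  rw [leader_of_not hm hl]
  exact (qseq_add_lt_of_lt (Nat.le_add_right _ _) hcol).trans_le (le_col_iff.mp le_rfl)

theorem leader_le (he : ∀ x, e x < M) (x : ℕ) : leader M e x ≤ x := by
  by_cases h : IsMarker M x ∨ IsLeader M x
  · exact (if_pos h).le
  · exact (leader_lt_of_not he (not_or.mp h).1 (not_or.mp h).2).le

theorem leader_leader (he : ∀ x, e x < M) (x : ℕ) :
    leader M e (leader M e x) = leader M e x := by
  by_cases hm : IsMarker M x
  · simp only [hm.leader_eq]
  · exact (isLeader_leader he hm).leader_eq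

theorem level_leader (he : ∀ x, e x < M) (x : ℕ) : level M e (leader M e x) = level M e x := by
  by_cases hm : IsMarker M x
  · rw [hm.leader_eq]
  · rw [level, if_neg (isLeader_leader he hm).not_isMarker, leader_leader he, level, if_neg hm]

theorem level_lt (he : ∀ x, e x < M) (x : ℕ) : level M e x < 2 * M := by
  have := he (leader M e x)
  unfold level IsMarker
  split_ifs <;> omega

/-- Going down in `encodingOrder` inside a level means going to a larger leader, or down to the
leader of the same group, so the leader of `x` is the smallest number on the way. -/
theorem eq_leader_iff (he : ∀ x, e x < M) {x l : ℕ} :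
    l = leader M e x ↔ (level M e l = level M e x ∧ (l = x ∨ encodingOrder M e l x)) ∧
      ∀ y ≤ x, level M e y = level M e x ∧ (y = x ∨ encodingOrder M e y x) → l ≤ y := by
  have hle := leader_le he x
  have hlevel := level_leader he x
  have hmem : leader M e x = x ∨ encodingOrder M e (leader M e x) x :=
    hle.eq_or_lt.imp_right fun h => Or.inr ⟨hlevel, Or.inr ⟨leader_leader he x, h⟩⟩
  have hmin : ∀ y, level M e y = level M e x ∧ (y = x ∨ encodingOrder M e y x) →
      leader M e x ≤ y := by
    rintro y ⟨hy, rfl | h⟩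
    · exact hle
    · have := leader_le he y
      unfold encodingOrder at h
      omega
  constructor
  · rintro rfl
    exact ⟨⟨hlevel, hmem⟩, fun y _ => hmin y⟩
  · rintro ⟨hl, hlmin⟩
    exact le_antisymm (hlmin _ hle ⟨hlevel, hmem⟩) (hmin l hl)

theorem isLeader_iff_leader_eq (he : ∀ x, e x < M) {x : ℕ} :
    IsLeader M x ↔ ¬ IsMarker M x ∧ leader M e x = x :=
  ⟨fun h => ⟨h.not_isMarker, h.leader_eq⟩,
    fun ⟨hm, h⟩ => by_contra fun hl => (leader_lt_of_not he hm hl).ne h⟩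

theorem encodingOrder_marker_iff {j x : ℕ} (hj : j < M) (hx : ¬ IsMarker M x) :
    encodingOrder M e (qseq (M + j)) x ↔ 2 * j < level M e x := by
  have hodd : level M e x = 2 * e (leader M e x) + 1 := if_neg hx
  rw [encodingOrder, level_qseq_add hj]
  omega

theorem level_eq_iff (he : ∀ x, e x < M) {x c : ℕ} (hx : ¬ IsMarker M x) :
    level M e x = c ↔ (Odd c ∧ c < 2 * M) ∧
      ∀ j : Fin M, encodingOrder M e (qseq (M + j)) x ↔ 2 * (j : ℕ) < c := by
  have hodd : level M e x = 2 * e (leader M e x) + 1 := if_neg hx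
  have hlt := level_lt he x
  simp only [encodingOrder_marker_iff (Fin.is_lt _) hx, Nat.odd_iff]
  refine ⟨fun h => ⟨by omega, fun j => by omega⟩, fun ⟨_, h⟩ => ?_⟩
  have h₁ := h ⟨c / 2, by omega⟩
  have h₂ := h ⟨level M e x / 2, by omega⟩
  simp only at h₁ h₂
  omega

theorem rowf_succ_eq_zero_iff (hM : 0 < M) {x : ℕ} (hx : M ≤ col (x + 1)) :
    rowf (x + 1) = 0 ↔ IsLeader M x ∧ ¬ IsLeader M (x + 1) := by
  unfold IsLeader
  rcases (rowf_le_col x).eq_or_lt with h | h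
  · have := col_succ_of_rowf_eq_col h
    omega
  · have := @col_add_of_le x 1 h
    omega

theorem col_eq_rowf_add_width_iff (hM : 0 < M) {x : ℕ} :
    col x = rowf x + M ↔ ¬ IsLeader M x ∧ IsLeader M (x + 1) := by
  unfold IsLeader
  rcases (rowf_le_col x).eq_or_lt with h | h
  · omega
  · have := @col_add_of_le x 1 h
    omega

theorem col_eq_rowf_add_iff {j x : ℕ} (hj : j < M) (hx : M ≤ col x) :
    col x = rowf x + j ↔ ∃ y ≤ x, y + (M - j) = x ∧ ¬ IsLeader M y ∧ IsLeader M (y + 1) := by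
  simp only [← col_eq_rowf_add_width_iff (hj.pos)]
  constructor
  · intro h
    have hy : x = qseq (col x) + (col x - M) + (M - j) := by
      have := qseq_col_add_rowf x
      omega
    have hcol : col (qseq (col x) + (col x - M)) = col x := col_qseq_add (Nat.sub_le _ _)
    have hrow : rowf (qseq (col x) + (col x - M)) = col x - M := rowf_qseq_add (Nat.sub_le _ _)
    exact ⟨_, by omega, hy.symm, by omega⟩
  · rintro ⟨y, _, rfl, hy⟩
    have := @col_add_of_le y (M - j) (by omega)
    omega

theorem color_eq_iff {x i : ℕ} (hx : ¬ IsMarker M x) :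
    e x = i ↔ IsLeader M x ∧ level M e x = 2 * i + 1 ∨
      ¬ IsLeader M x ∧ col (leader M e x) = rowf (leader M e x) + i := by
  by_cases hl : IsLeader M x
  · simp only [level, hx, hl.leader_eq, if_false, hl, true_and, not_true, false_and, or_false]
    omega
  · simp [hl, col_leader_of_not hx hl, rowf_leader]

theorem eq_rowHead_iff_leader (he : ∀ x, e x < M) {x s : ℕ} (hx : ¬ IsMarker M x) :
    s = rowHead x ↔ col s = rowf s + 0 ∧ ∃ j : Fin M,
      col (leader M e x) = rowf (leader M e x) + j ∧ col s + j = col (leader M e x) := by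
  rw [eq_rowHead_iff, ← rowf_leader (M := M) (e := e) x]
  refine and_congr_right fun hs => ⟨fun h => ?_, by omega⟩
  have hl : col (leader M e x) < rowf (leader M e x) + M := isLeader_leader he hx
  have := rowf_le_col (leader M e x)
  exact ⟨⟨col (leader M e x) - rowf (leader M e x), by omega⟩, by dsimp only; omega⟩

end EncodingOrder

section DefinabilityFromOrder

open PrefixDefinable

variable {M : ℕ} {e : ℕ → ℕ}

theorem prefixDefinable_of_markers_lt {α : Type*} (a : α) {p : ℕ → Prop}
    {Q : ℕ → (α → ℕ) → Prop}
    (hQ : PrefixDefinable (pairStruct (encodingOrder M e)) Q)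
    (h : ∀ n v, (∀ b, v b ≤ n) → qseq (2 * M) ≤ v a → (p (v a) ↔ Q n v)) :
    PrefixDefinable (pairStruct (encodingOrder M e)) fun _ v => p (v a) :=
  cases_lt_const a _ hQ (fun i => const (p i)) h fun _ _ _ _ => Iff.rfl

theorem not_isMarker_of_qseq_le {x : ℕ} (hx : qseq (2 * M) ≤ x) : ¬ IsMarker M x :=
  fun h => h.lt_qseq.not_ge hx

variable {α : Type*} (a b : α)

theorem prefixDefinable_encodingOrder_isMarker :
    PrefixDefinable (pairStruct (encodingOrder M e)) fun _ v => IsMarker M (v a) :=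
  prefixDefinable_of_markers_lt a (const False) fun _ _ _ hx =>
    iff_false_intro (not_isMarker_of_qseq_le hx)

variable (he : ∀ x, e x < M)
include he

theorem prefixDefinable_encodingOrder_level_eq (c : ℕ) :
    PrefixDefinable (pairStruct (encodingOrder M e)) fun _ v => level M e (v a) = c := by
  have h : PrefixDefinable (pairStruct (encodingOrder M e)) fun n v => (Odd c ∧ c < 2 * M) ∧
      ∀ j : Fin M, (∃ m ≤ n, m = qseq (M + j) ∧ encodingOrder M e m (v a)) ↔ 2 * (j : ℕ) < c :=
    and (const _) (iForall fun _ =>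
      iff (exists_le (and (eq_const _ _) (prefixDefinable_pairStruct_snd _ _ _))) (const _))
  refine prefixDefinable_of_markers_lt a (p := fun x => level M e x = c) h fun n v hv hx => ?_
  rw [level_eq_iff he (not_isMarker_of_qseq_le hx)]
  refine and_congr_right fun _ => forall_congr' fun j => iff_congr ?_ Iff.rfl
  have hle : qseq (M + j) ≤ n :=
    (isMarker_qseq_add j.2).lt_qseq.le.trans (hx.trans (hv a))
  simp [hle]

theorem prefixDefinable_encodingOrder_level_eq_level :
    PrefixDefinable (pairStruct (encodingOrder M e)) fun _ v =>
      level M e (v a) = level M e (v b) :=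
  (exists_lt (2 * M) fun c => and (prefixDefinable_encodingOrder_level_eq a he c)
    (prefixDefinable_encodingOrder_level_eq b he c)).of_iff fun _ _ _ =>
      ⟨fun h => ⟨_, level_lt he _, h, rfl⟩, fun ⟨_, _, ha, hb⟩ => ha.trans hb.symm⟩

theorem prefixDefinable_encodingOrder_eq_leader :
    PrefixDefinable (pairStruct (encodingOrder M e)) fun _ v => v b = leader M e (v a) := by
  have h {β : Type _} (x y : β) : PrefixDefinable (pairStruct (encodingOrder M e)) fun _ v =>
      level M e (v y) = level M e (v x) ∧ (v y = v x ∨ encodingOrder M e (v y) (v x)) :=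
    and (prefixDefinable_encodingOrder_level_eq_level y x he)
      (or (eq y x) (prefixDefinable_pairStruct_snd _ y x))
  have hmin : PrefixDefinable (pairStruct (encodingOrder M e)) fun n v => ∀ y ≤ n, y ≤ v a →
      level M e y = level M e (v a) ∧ (y = v a ∨ encodingOrder M e y (v a)) → v b ≤ y :=
    forall_le (imp (le _ _) (imp (h (some a) none) (le _ _)))
  refine (and (h a b) hmin).of_iff fun n v hv =>
    (eq_leader_iff he).trans (and_congr_right fun _ => ?_)
  exact ⟨fun h y _ => h y, fun h y hy => h y (hy.trans (hv a)) hy⟩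

theorem prefixDefinable_encodingOrder_subst_leader {P : ℕ → (α → ℕ) → ℕ → Prop}
    (hP : PrefixDefinable (α := Option α) (pairStruct (encodingOrder M e)) fun n w =>
      P n (fun a => w (some a)) (w none)) :
    PrefixDefinable (pairStruct (encodingOrder M e)) fun n v => P n v (leader M e (v a)) :=
  subst (prefixDefinable_encodingOrder_eq_leader 0 1 he) (leader_le he) a hP

theorem prefixDefinable_encodingOrder_isLeader :
    PrefixDefinable (pairStruct (encodingOrder M e)) fun _ v => IsLeader M (v a) :=
  (and (prefixDefinable_encodingOrder_isMarker a).not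
    (prefixDefinable_encodingOrder_eq_leader a a he)).of_iff fun _ _ _ =>
      (isLeader_iff_leader_eq he).trans (and_congr_right fun _ => eq_comm)

theorem prefixDefinable_encodingOrder_rowf_eq_zero :
    PrefixDefinable (pairStruct (encodingOrder M e)) fun _ v => rowf (v a) = 0 := by
  have h : PrefixDefinable (pairStruct (encodingOrder M e)) fun n v => ∃ y ≤ n, y + 1 = v a ∧
      IsLeader M y ∧ ¬ IsLeader M (v a) :=
    exists_le (and (add_const _ _ 1) (and (prefixDefinable_encodingOrder_isLeader none he)
      (prefixDefinable_encodingOrder_isLeader (some a) he).not))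
  refine prefixDefinable_of_markers_lt a (p := fun x => rowf x = 0) h fun n v hv hx => ?_
  have hM : 0 < M := (he 0).pos
  have hcol : 2 * M ≤ col (v a) := le_col_iff.mpr hx
  have hpos : 0 < v a := (Nat.mul_pos two_pos hM).trans_le ((self_le_qseq _).trans hx)
  obtain ⟨y, hy⟩ : ∃ y, y + 1 = v a := ⟨v a - 1, Nat.sub_add_cancel hpos⟩
  rw [← hy] at hcol ⊢
  rw [rowf_succ_eq_zero_iff hM (by omega)]
  have := hv a
  constructor
  · exact fun h => ⟨y, by omega, rfl, h⟩
  · rintro ⟨z, _, hz, h⟩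
    rwa [Nat.succ_injective hz] at h

theorem prefixDefinable_encodingOrder_col_lt_col :
    PrefixDefinable (pairStruct (encodingOrder M e)) fun _ v => col (v a) < col (v b) := by
  have h : PrefixDefinable (pairStruct (encodingOrder M e)) fun n v =>
      ∃ z ≤ n, z ≤ v b ∧ v a < z ∧ rowf z = 0 :=
    exists_le (and (le _ _) (and (lt _ _) (prefixDefinable_encodingOrder_rowf_eq_zero none he)))
  refine h.of_iff fun n v hv => col_lt_col_iff.trans ?_
  exact exists_congr fun z => ⟨fun h => ⟨h.1.trans (hv b), h⟩, And.right⟩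

theorem prefixDefinable_encodingOrder_col_add_eq_col (j : ℕ) :
    PrefixDefinable (pairStruct (encodingOrder M e)) fun _ v => col (v a) + j = col (v b) := by
  induction j generalizing α with
  | zero =>
    exact ((prefixDefinable_encodingOrder_col_lt_col a b he).not.and
      (prefixDefinable_encodingOrder_col_lt_col b a he).not).of_iff fun _ _ _ => by omega
  | succ j ih =>
    have hsucc {β : Type _} (x y : β) : PrefixDefinable (pairStruct (encodingOrder M e))
        fun _ v => col (v x) + 1 = col (v y) := by
      have hno : PrefixDefinable (pairStruct (encodingOrder M e)) fun n v =>
          ∀ z ≤ n, z ≤ v y → ¬ (col (v x) < col z ∧ col z < col (v y)) :=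
        forall_le (imp (le _ _) (not
          (and (prefixDefinable_encodingOrder_col_lt_col (some x) none he)
            (prefixDefinable_encodingOrder_col_lt_col none (some y) he))))
      refine (and (prefixDefinable_encodingOrder_col_lt_col x y he) hno).of_iff fun n v hv =>
        col_succ_eq_col_iff.trans (and_congr_right fun _ => ?_)
      exact ⟨fun h z _ => h z, fun h z hz => h z (hz.trans (hv y)) hz⟩
    have h : PrefixDefinable (pairStruct (encodingOrder M e)) fun n v =>
        ∃ w ≤ n, w ≤ v b ∧ col (v a) + j = col w ∧ col w + 1 = col (v b) :=
      exists_le (and (le _ _) (and (ih (some a) none) (hsucc none (some b))))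
    refine h.of_iff fun n v hv => col_add_succ_eq_col_iff.trans ?_
    exact exists_congr fun w => ⟨fun h => ⟨h.1.trans (hv b), h⟩, And.right⟩

theorem prefixDefinable_encodingOrder_col_eq_rowf_add {j : ℕ} (hj : j < M) :
    PrefixDefinable (pairStruct (encodingOrder M e)) fun _ v =>
      col (v a) = rowf (v a) + j := by
  have h : PrefixDefinable (pairStruct (encodingOrder M e)) fun n v =>
      ∃ y ≤ n, y + (M - j) = v a ∧ ¬ IsLeader M y ∧ ∃ z ≤ n, y + 1 = z ∧ IsLeader M z :=
    exists_le (and (add_const _ _ _) (and (prefixDefinable_encodingOrder_isLeader none he).not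
      (exists_le (and (add_const _ _ _) (prefixDefinable_encodingOrder_isLeader none he)))))
  refine prefixDefinable_of_markers_lt a (p := fun x => col x = rowf x + j) h fun n v hv hx => ?_
  have hcol : 2 * M ≤ col (v a) := le_col_iff.mpr hx
  rw [col_eq_rowf_add_iff hj (by omega)]
  have := hv a
  constructor
  · rintro ⟨y, _, hyx, hy, hsucc⟩
    exact ⟨y, by omega, hyx, hy, y + 1, by omega, rfl, hsucc⟩
  · rintro ⟨y, _, hyx, hy, _, _, rfl, hsucc⟩
    exact ⟨y, by omega, hyx, hy, hsucc⟩

theorem prefixDefinable_encodingOrder_eq_rowHead :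
    PrefixDefinable (pairStruct (encodingOrder M e)) fun _ v => v b = rowHead (v a) := by
  have h : PrefixDefinable (pairStruct (encodingOrder M e)) fun _ v =>
      col (v b) = rowf (v b) + 0 ∧ ∃ j : Fin M,
        col (leader M e (v a)) = rowf (leader M e (v a)) + j ∧
          col (v b) + j = col (leader M e (v a)) :=
    and (prefixDefinable_encodingOrder_col_eq_rowf_add b he (he 0).pos)
      (prefixDefinable_encodingOrder_subst_leader a he
        (P := fun _ v l => ∃ j : Fin M, col l = rowf l + j ∧ col (v b) + j = col l)
        (iExists fun j => and (prefixDefinable_encodingOrder_col_eq_rowf_add none he j.2)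
          (prefixDefinable_encodingOrder_col_add_eq_col (some b) none he j)))
  exact cases_lt_const a (qseq (2 * M)) h (fun i => eq_const b (rowHead i))
    (fun _ _ _ hx => eq_rowHead_iff_leader he (not_isMarker_of_qseq_le hx)) fun _ _ _ _ => Iff.rfl

theorem prefixDefinable_encodingOrder_rowf_lt_rowf :
    PrefixDefinable (pairStruct (encodingOrder M e)) fun _ v => rowf (v a) < rowf (v b) := by
  have hrowHead : PrefixDefinable (pairStruct (encodingOrder M e)) fun _ (v : Fin 2 → ℕ) =>
    v 1 = rowHead (v 0) := prefixDefinable_encodingOrder_eq_rowHead 0 1 he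
  refine (subst hrowHead rowHead_le a (P := fun _ v s => s < rowHead (v b)) ?_).of_iff
    fun _ _ _ => rowf_lt_rowf_iff
  exact subst hrowHead rowHead_le (some b) (P := fun _ v t => v none < t) (lt _ _)

theorem prefixDefinable_encodingOrder_ordc :
    PrefixDefinable (pairStruct (encodingOrder M e)) fun _ v => ordc (v a) (v b) :=
  (or (prefixDefinable_encodingOrder_rowf_lt_rowf a b he)
    (and (prefixDefinable_encodingOrder_rowf_lt_rowf b a he).not
      (prefixDefinable_encodingOrder_col_lt_col a b he))).of_iff fun _ _ _ => by
        unfold ordc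
        omega

theorem prefixDefinable_encodingOrder_color_eq (i : ℕ) :
    PrefixDefinable (pairStruct (encodingOrder M e)) fun _ v => e (v a) = i := by
  rcases lt_or_ge i M with hi | hi
  · have h : PrefixDefinable (pairStruct (encodingOrder M e)) fun _ v =>
        IsLeader M (v a) ∧ level M e (v a) = 2 * i + 1 ∨
          ¬ IsLeader M (v a) ∧ col (leader M e (v a)) = rowf (leader M e (v a)) + i :=
      or (and (prefixDefinable_encodingOrder_isLeader a he)
          (prefixDefinable_encodingOrder_level_eq a he _))
        (and (prefixDefinable_encodingOrder_isLeader a he).not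
          (prefixDefinable_encodingOrder_subst_leader a he
            (P := fun _ _ l => col l = rowf l + i)
            (prefixDefinable_encodingOrder_col_eq_rowf_add none he hi)))
    exact prefixDefinable_of_markers_lt a (p := fun x => e x = i) h fun _ _ _ hx =>
      color_eq_iff (not_isMarker_of_qseq_le hx)
  · exact (const False).of_iff fun _ v _ => iff_false_intro ((he (v a)).trans_le hi).ne

end DefinabilityFromOrder

section Bits

theorem lt_self_of_testBit {x i : ℕ} (h : x.testBit i) : i < x :=
  i.lt_two_pow_self.trans_le (Nat.ge_two_pow_of_testBit h)

theorem eq_of_forall_testBit_iff {x y : ℕ} (h : ∀ i, x.testBit i ↔ y.testBit i) : x = y :=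
  Nat.eq_of_testBit_eq fun i => Bool.eq_iff_iff.mpr (h i)

theorem lt_of_testBit_iff {x y i : ℕ} (hx : ¬ x.testBit i) (hy : y.testBit i)
    (h : ∀ j, i < j → (x.testBit j ↔ y.testBit j)) : x < y :=
  Nat.lt_of_testBit i (Bool.eq_false_iff.mpr hx) hy fun j hj => Bool.eq_iff_iff.mpr (h j hj)

theorem exists_testBit_of_lt {x y : ℕ} (h : x < y) : ∃ i, y.testBit i ∧ ¬ x.testBit i ∧
    ∀ j, i < j → (x.testBit j ↔ y.testBit j) := by
  obtain ⟨i, hi, hmax⟩ := Nat.exists_most_significant_bit (Nat.xor_ne_zero_iff.mpr h.ne)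
  have hagree : ∀ j, i < j → (x.testBit j ↔ y.testBit j) := fun j hj => by
    have := hmax j hj
    rwa [Nat.testBit_xor, bne_eq_false_iff_eq, Bool.eq_iff_iff] at this
  rw [Nat.testBit_xor, bne_iff_ne, Ne, Bool.eq_iff_iff] at hi
  by_cases hy : y.testBit i
  · exact ⟨i, hy, fun hx => hi (iff_of_true hx hy), hagree⟩
  · have hx : x.testBit i := by_contra fun hx => hi (iff_of_false hx hy)
    exact absurd (lt_of_testBit_iff hy hx fun j hj => (hagree j hj).symm) h.not_gt

open Classical in
/-- The number below `2 ^ m` with exactly those bits `i < m` for which `p i` holds. -/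
noncomputable def ofBitPred (m : ℕ) (p : ℕ → Prop) : ℕ := Nat.ofBits fun i : Fin m => decide (p i)

theorem ofBitPred_lt (m : ℕ) (p : ℕ → Prop) : ofBitPred m p < 2 ^ m := Nat.ofBits_lt_two_pow _

theorem testBit_ofBitPred {m i : ℕ} {p : ℕ → Prop} :
    (ofBitPred m p).testBit i ↔ i < m ∧ p i := by
  unfold ofBitPred
  rcases lt_or_ge i m with h | h
  · simp [Nat.testBit_ofBits_lt _ _ h, h]
  · simp [Nat.testBit_ofBits_ge _ _ h, h.not_gt]

theorem le_mod_add_mod_iff (x y p : ℕ) : 2 ^ p ≤ x % 2 ^ p + y % 2 ^ p ↔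
    ∃ q < p, x.testBit q ∧ y.testBit q ∧ ∀ r < p, q < r → x.testBit r ∨ y.testBit r := by
  induction p with
  | zero => simp [Nat.mod_one]
  | succ p ih =>
    have hstep : 2 ^ (p + 1) ≤ x % 2 ^ (p + 1) + y % 2 ^ (p + 1) ↔
        (x.testBit p ∧ y.testBit p) ∨
          ((x.testBit p ∨ y.testBit p) ∧ 2 ^ p ≤ x % 2 ^ p + y % 2 ^ p) := by
      have hx := x.mod_lt (Nat.two_pow_pos p)
      have hy := y.mod_lt (Nat.two_pow_pos p)
      rw [Nat.mod_pow_succ, Nat.mod_pow_succ, ← Nat.toNat_testBit, ← Nat.toNat_testBit, pow_succ]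
      cases x.testBit p <;> cases y.testBit p <;> simp <;> omega
    rw [hstep, ih]
    constructor
    · rintro (⟨hx, hy⟩ | ⟨hp, q, hq, hx, hy, hr⟩)
      · exact ⟨p, p.lt_succ_self, hx, hy, fun r hr => by omega⟩
      · exact ⟨q, Nat.lt_succ_of_lt hq, hx, hy, Nat.forall_lt_succ_right.mpr ⟨hr, fun _ => hp⟩⟩
    · rintro ⟨q, hq, hx, hy, hr⟩
      rw [Nat.forall_lt_succ_right] at hr
      rcases Nat.lt_succ_iff_lt_or_eq.mp hq with h | rfl
      · exact Or.inr ⟨hr.2 h, q, h, hx, hy, hr.1⟩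
      · exact Or.inl ⟨hx, hy⟩

theorem testBit_add_iff (x y p : ℕ) : (x + y).testBit p ↔
    ((x.testBit p ↔ y.testBit p) ↔ 2 ^ p ≤ x % 2 ^ p + y % 2 ^ p) := by
  simp only [Nat.testBit_eq_decide_div_mod_eq, decide_eq_true_eq, Nat.add_div (Nat.two_pow_pos p)]
  split_ifs with h <;> simp only [h, iff_true, iff_false] <;> omega

theorem add_eq_iff_forall_testBit {n x y z : ℕ} (hx : x ≤ n) (hy : y ≤ n) (hz : z ≤ n) :
    x + y = z ↔ ∀ p ≤ n, z.testBit p ↔ ((x.testBit p ↔ y.testBit p) ↔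
      ∃ q ≤ n, q < p ∧ x.testBit q ∧ y.testBit q ∧
        ∀ r ≤ n, r < p → q < r → x.testBit r ∨ y.testBit r) := by
  have hcarry : ∀ p ≤ n, (∃ q ≤ n, q < p ∧ x.testBit q ∧ y.testBit q ∧
      ∀ r ≤ n, r < p → q < r → x.testBit r ∨ y.testBit r) ↔ 2 ^ p ≤ x % 2 ^ p + y % 2 ^ p := by
    intro p hp
    rw [le_mod_add_mod_iff]
    constructor
    · rintro ⟨q, -, hq, hxq, hyq, hr⟩
      exact ⟨q, hq, hxq, hyq, fun r hrp => hr r (hrp.le.trans hp) hrp⟩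
    · rintro ⟨q, hq, hxq, hyq, hr⟩
      exact ⟨q, hq.le.trans hp, hq, hxq, hyq, fun r _ => hr r⟩
  have hz_large : ∀ p, n < p → ¬ (x + y).testBit p ∧ ¬ z.testBit p := by
    intro p hp
    have hpow : 2 * n < 2 ^ p := calc
      2 * n < 2 * 2 ^ n := Nat.mul_lt_mul_of_pos_left n.lt_two_pow_self two_pos
      _ = 2 ^ (n + 1) := pow_succ' 2 n |>.symm
      _ ≤ 2 ^ p := Nat.pow_le_pow_right two_pos hp
    exact ⟨mt Nat.ge_two_pow_of_testBit (by omega), mt Nat.ge_two_pow_of_testBit (by omega)⟩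
  calc x + y = z ↔ ∀ p, (x + y).testBit p ↔ z.testBit p :=
        ⟨fun h _ => h ▸ Iff.rfl, eq_of_forall_testBit_iff⟩
    _ ↔ ∀ p ≤ n, z.testBit p ↔ (x + y).testBit p :=
        ⟨fun h p _ => (h p).symm, fun h p => (le_or_gt p n).elim (fun hp => (h p hp).symm)
          fun hp => iff_of_false (hz_large p hp).1 (hz_large p hp).2⟩
    _ ↔ _ := forall₂_congr fun p hp => by rw [testBit_add_iff, hcarry p hp]

end Bits

open PrefixDefinable

theorem PrefixDefinable.testBit {α : Type*} (a b : α) :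
    PrefixDefinable bitStruct fun _ v => (v a).testBit (v b) :=
  rel₂ (L := LBit) (r := fun x y => x.testBit y) BitRel.bit (fun _ _ => Iff.rfl) a b

section OrderFromBit

/-- Comparison of `a` and `b` at the topmost bit position at which they differ, where bit positions
are themselves compared by `Q`. -/
def ltStep (n : ℕ) (Q : ℕ → ℕ → Prop) (a b : ℕ) : Prop :=
  ∃ c ≤ n, b.testBit c ∧ ¬ a.testBit c ∧
    ∀ d ≤ n, ¬ (a.testBit d ↔ b.testBit d) → ¬ d = c → Q d c

theorem lt_of_ltStep {n a b : ℕ} {Q : ℕ → ℕ → Prop} (ha : a ≤ n) (hb : b ≤ n)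
    (hQ : ∀ d c, d ≤ n → c < b → Q d c → d < c) (h : ltStep n Q a b) : a < b := by
  obtain ⟨c, -, hbc, hac, hd⟩ := h
  refine lt_of_testBit_iff hac hbc fun d hcd => by_contra fun hne => ?_
  have hdn : d ≤ n := by
    by_cases had : a.testBit d
    · exact (lt_self_of_testBit had).le.trans ha
    · exact (lt_self_of_testBit (show b.testBit d by tauto)).le.trans hb
  exact (hQ d c hdn (lt_self_of_testBit hbc) (hd d hdn hne hcd.ne')).not_gt hcd

theorem ltStep_of_lt {n a b : ℕ} {Q : ℕ → ℕ → Prop} (hb : b ≤ n)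
    (hQ : ∀ d c, b.testBit c → d < c → Q d c) (h : a < b) : ltStep n Q a b := by
  obtain ⟨c, hbc, hac, hd⟩ := exists_testBit_of_lt h
  exact ⟨c, (lt_self_of_testBit hbc).le.trans hb, hbc, hac, fun d _ hne hdc =>
    hQ d c hbc (lt_of_le_of_ne (not_lt.mp fun hcd => hne (hd d hcd)) hdc)⟩

/-- `Q` is contained in the order `<` of `{0, ..., n}`, and agrees with it below `m`. -/
structure IsLTBelow (n m : ℕ) (Q : ℕ → ℕ → Prop) : Prop where
  lt_of_rel : ∀ a b, a ≤ n → b ≤ n → Q a b → a < b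
  rel_of_lt : ∀ a b, b < m → b ≤ n → a < b → Q a b

theorem IsLTBelow.ltStep {n m : ℕ} {Q : ℕ → ℕ → Prop} (h : IsLTBelow n m Q) :
    IsLTBelow n (2 ^ m) (ltStep n Q) where
  lt_of_rel _ _ ha hb := lt_of_ltStep ha hb fun d c hd hc => h.lt_of_rel d c hd (hc.le.trans hb)
  rel_of_lt _ _ hbm hb := ltStep_of_lt hb fun d c hc => h.rel_of_lt d c
    ((Nat.pow_lt_pow_iff_right one_lt_two).mp ((Nat.ge_two_pow_of_testBit hc).trans_lt hbm))
    ((lt_self_of_testBit hc).le.trans hb)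

/-- The relation coded by the set of sets `R`: some member of `R` contains `a` but not `b`, and some
member of `R` contains `b`. Sets are represented by the numbers whose bits are their elements. -/
def codedLT (n R a b : ℕ) : Prop :=
  (∃ s ≤ n, R.testBit s ∧ s.testBit a ∧ ¬ s.testBit b) ∧ ∃ s ≤ n, R.testBit s ∧ s.testBit b

/-- `R` codes a relation that refines its own step relation, whence that relation is contained
in `<`. -/
def IsOrderCode (n R : ℕ) : Prop :=
  ∀ a ≤ n, ∀ b ≤ n, codedLT n R a b → ltStep n (codedLT n R) a b

theorem IsOrderCode.lt {n R a b : ℕ} (hR : IsOrderCode n R) (ha : a ≤ n) (hb : b ≤ n)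
    (h : codedLT n R a b) : a < b := by
  induction b using Nat.strong_induction_on generalizing a with
  | _ b ih =>
    exact lt_of_ltStep ha hb (fun _ c hd hc => ih c hc hd (hc.le.trans hb)) (hR a ha b hb h)

/-- The set of initial segments `{0, ..., i}` with `i ≤ b`. -/
noncomputable def initialSegments (b : ℕ) : ℕ :=
  ofBitPred (2 ^ (b + 1)) fun s => ∃ i ≤ b, s = 2 ^ (i + 1) - 1

theorem testBit_initialSegments {b s : ℕ} :
    (initialSegments b).testBit s ↔ ∃ i ≤ b, s = 2 ^ (i + 1) - 1 := by
  refine testBit_ofBitPred.trans (and_iff_right_of_imp ?_)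
  rintro ⟨i, hi, rfl⟩
  have := Nat.pow_le_pow_right two_pos (Nat.succ_le_succ hi)
  have := Nat.two_pow_pos (i + 1)
  omega

theorem codedLT_initialSegments {n b x y : ℕ} (hn : initialSegments b ≤ n) :
    codedLT n (initialSegments b) x y ↔ x < y ∧ y ≤ b := by
  have hmem : ∀ i z : ℕ, (2 ^ (i + 1) - 1).testBit z ↔ z ≤ i := fun i z => by
    simp [Nat.testBit_two_pow_sub_one]
  constructor
  · rintro ⟨⟨s, -, hs, hsx, hsy⟩, t, -, ht, hty⟩
    obtain ⟨i, -, rfl⟩ := testBit_initialSegments.mp hs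
    obtain ⟨j, hj, rfl⟩ := testBit_initialSegments.mp ht
    rw [hmem] at hsx hsy hty
    omega
  · rintro ⟨hxy, hyb⟩
    have hseg : ∀ i ≤ b, 2 ^ (i + 1) - 1 ≤ n ∧ (initialSegments b).testBit (2 ^ (i + 1) - 1) :=
      fun i hi => have h := testBit_initialSegments.mpr ⟨i, hi, rfl⟩
        ⟨(lt_self_of_testBit h).le.trans hn, h⟩
    obtain ⟨hxn, hx⟩ := hseg x (hxy.le.trans hyb)
    obtain ⟨hyn, hy⟩ := hseg y hyb
    exact ⟨⟨_, hxn, hx, (hmem x x).mpr le_rfl, fun h => hxy.not_ge ((hmem x y).mp h)⟩,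
      _, hyn, hy, (hmem y y).mpr le_rfl⟩

theorem isLTBelow_exists_codedLT (n : ℕ) : IsLTBelow n (Nat.log 2 (Nat.log 2 n))
    fun a b => ∃ R ≤ n, IsOrderCode n R ∧ codedLT n R a b where
  lt_of_rel a b ha hb := fun ⟨_, _, hR, h⟩ => hR.lt ha hb h
  rel_of_lt a b hbm _ hab := by
    have hlog : Nat.log 2 n ≠ 0 := fun h => by simp [h] at hbm
    have hn : initialSegments b ≤ n := calc
      initialSegments b ≤ 2 ^ 2 ^ (b + 1) := (ofBitPred_lt _ _).le
      _ ≤ n := Nat.pow_le_of_le_log (fun h => hlog (by simp [h])) (Nat.pow_le_of_le_log hlog hbm)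
    refine ⟨_, hn, fun x _ y hy hxy => ?_, (codedLT_initialSegments hn).mpr ⟨hab, le_rfl⟩⟩
    obtain ⟨hxy, hyb⟩ := (codedLT_initialSegments hn).mp hxy
    exact ltStep_of_lt hy (fun d c hc hdc => (codedLT_initialSegments hn).mpr
      ⟨hdc, (lt_self_of_testBit hc).le.trans hyb⟩) hxy

theorem lt_two_pow_two_pow_two_pow_log_log (n : ℕ) :
    n < 2 ^ 2 ^ 2 ^ Nat.log 2 (Nat.log 2 n) := by
  have hlog : Nat.log 2 n + 1 ≤ 2 ^ (Nat.log 2 (Nat.log 2 n) + 1) :=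
    Nat.lt_pow_succ_log_self one_lt_two _
  calc n < 2 ^ (Nat.log 2 n + 1) := Nat.lt_pow_succ_log_self one_lt_two n
    _ ≤ 2 ^ 2 ^ (Nat.log 2 (Nat.log 2 n) + 1) := Nat.pow_le_pow_right two_pos hlog
    _ ≤ 2 ^ 2 ^ 2 ^ Nat.log 2 (Nat.log 2 n) :=
      Nat.pow_le_pow_right two_pos (Nat.pow_le_pow_right two_pos Nat.lt_two_pow_self)

variable {α : Type*}

theorem prefixDefinable_ltStep {Q : ℕ → (α → ℕ) → ℕ → ℕ → Prop}
    (hQ : PrefixDefinable (α := Option (Option α)) bitStruct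
      fun n w => Q n (fun a => w (some (some a))) (w none) (w (some none))) (a b : α) :
    PrefixDefinable bitStruct fun n v => ltStep n (Q n v) (v a) (v b) :=
  exists_le (and (testBit _ _) (and (testBit _ _).not
    (forall_le (imp (iff (testBit _ _) (testBit _ _)).not (imp (eq _ _).not hQ)))))

theorem prefixDefinable_codedLT (r a b : α) :
    PrefixDefinable bitStruct fun n v => codedLT n (v r) (v a) (v b) :=
  and (exists_le (and (testBit _ _) (and (testBit _ _) (testBit _ _).not)))
    (exists_le (and (testBit _ _) (testBit _ _)))

theorem prefixDefinable_exists_codedLT (a b : α) : PrefixDefinable bitStruct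
    fun n v => ∃ R ≤ n, IsOrderCode n R ∧ codedLT n R (v a) (v b) :=
  exists_le (and (forall_le (forall_le (imp (prefixDefinable_codedLT _ _ _)
    (prefixDefinable_ltStep (Q := fun n v => codedLT n (v (some (some none))))
      (prefixDefinable_codedLT _ _ _) _ _)))) (prefixDefinable_codedLT _ _ _))

instance definesLT_bitStruct : DefinesLT bitStruct where
  prefixDefinable_lt := by
    let Q (n : ℕ) (a b : ℕ) : Prop := ∃ R ≤ n, IsOrderCode n R ∧ codedLT n R a b
    have h : PrefixDefinable bitStruct fun n (v : Fin 2 → ℕ) =>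
        ltStep n (ltStep n (ltStep n (Q n))) (v 0) (v 1) :=
      prefixDefinable_ltStep (prefixDefinable_ltStep (prefixDefinable_ltStep
        (prefixDefinable_exists_codedLT _ _) _ _) _ _) _ _
    refine h.of_iff fun n v hv => ?_
    have hQ := (isLTBelow_exists_codedLT n).ltStep.ltStep.ltStep
    exact ⟨hQ.rel_of_lt _ _ ((hv 1).trans_lt (lt_two_pow_two_pow_two_pow_log_log n)) (hv 1),
      hQ.lt_of_rel _ _ (hv 0) (hv 1)⟩

end OrderFromBit

theorem PrefixDefinable.add_eq {α : Type*} (a b c : α) :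
    PrefixDefinable bitStruct fun _ v => v a + v b = v c := by
  have h : PrefixDefinable bitStruct fun n v => ∀ p ≤ n, (v c).testBit p ↔
      (((v a).testBit p ↔ (v b).testBit p) ↔ ∃ q ≤ n, q < p ∧ (v a).testBit q ∧ (v b).testBit q ∧
        ∀ r ≤ n, r < p → q < r → (v a).testBit r ∨ (v b).testBit r) :=
    forall_le (iff (testBit _ _) (iff (iff (testBit _ _) (testBit _ _)) (exists_le (and (lt _ _)
      (and (testBit _ _) (and (testBit _ _) (forall_le (imp (lt _ _) (imp (lt _ _)
        (or (testBit _ _) (testBit _ _)))))))))))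
  exact h.of_iff fun n v hv => add_eq_iff_forall_testBit (hv a) (hv b) (hv c)

section ShortNumbers

theorem le_log_iff_exists_testBit {n p : ℕ} :
    p ≤ Nat.log 2 n ↔ p = 0 ∨ ∃ x ≤ n, x.testBit p := by
  rcases eq_or_ne n 0 with rfl | hn
  · simp
  · rw [Nat.le_log_iff_pow_le one_lt_two hn]
    constructor
    · exact fun h => Or.inr ⟨2 ^ p, h, Nat.testBit_two_pow_self⟩
    · rintro (rfl | ⟨x, hx, hp⟩)
      · exact Nat.one_le_iff_ne_zero.mpr hn
      · exact (Nat.ge_two_pow_of_testBit hp).trans hx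

theorem prefixDefinable_le_mul_log {α : Type*} (k : ℕ) (a : α) :
    PrefixDefinable bitStruct fun n v => v a ≤ k * Nat.log 2 n := by
  induction k generalizing α with
  | zero => exact (eq_const a 0).of_iff fun n v _ => by rw [zero_mul, Nat.le_zero]
  | succ k ih =>
    have h : PrefixDefinable bitStruct fun n v => ∃ x ≤ n, ∃ y ≤ n, x ≤ k * Nat.log 2 n ∧
        (y = 0 ∨ ∃ z ≤ n, z.testBit y) ∧ x + y = v a :=
      exists_le (exists_le (and (ih _) (and (or (eq_const _ _) (exists_le (testBit _ _)))
        (add_eq _ _ _))))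
    refine h.of_iff fun n v hv => ?_
    simp only [← le_log_iff_exists_testBit, add_mul, one_mul]
    constructor
    · intro ha
      have := hv a
      exact ⟨v a - min (v a) (Nat.log 2 n), by omega, min (v a) (Nat.log 2 n), by omega, by omega,
        by omega, by omega⟩
    · rintro ⟨x, -, y, -, hx, hy, h⟩
      omega

/-- The bound on the numbers on which recursion can be coded inside `{0, ..., n}`. It exceeds every
bit position, and every carry, of a product that is at most `n`. -/
def shortBound (n : ℕ) : ℕ := 3 * Nat.log 2 n

theorem prefixDefinable_le_shortBound {α : Type*} (a : α) :
    PrefixDefinable bitStruct fun n v => v a ≤ shortBound n :=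
  prefixDefinable_le_mul_log 3 a

/-- A prefix size `n` such that `K + 1` blocks of length `l`, each holding one short number, fit
into the binary representation of a number `≤ n`, and such that two nested sequences of `K` steps
reach every short number. -/
structure HasRoom (n K l : ℕ) : Prop where
  pos : 0 < l
  shortBound_lt : shortBound n < 2 ^ l
  mul_le_log : (K + 1) * l ≤ Nat.log 2 n
  shortBound_le : shortBound n ≤ K * K

theorem HasRoom.two_pow_le {n K l : ℕ} (h : HasRoom n K l) : 2 ^ ((K + 1) * l) ≤ n := by
  have hpos := Nat.mul_pos K.succ_pos h.pos
  refine Nat.pow_le_of_le_log (fun hn => ?_) h.mul_le_log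
  have hlog := h.mul_le_log
  rw [hn, Nat.log_zero_right] at hlog
  exact hpos.not_ge hlog

theorem HasRoom.two_mul_shortBound_le {n K l : ℕ} (h : HasRoom n K l) : 2 * shortBound n ≤ n := by
  rcases K.eq_zero_or_pos with rfl | hK
  · have := h.shortBound_le
    omega
  have hKl : 0 < K * l := Nat.mul_pos hK h.pos
  calc 2 * shortBound n ≤ 2 ^ (l + 1) := by rw [pow_succ']; gcongr; exact h.shortBound_lt.le
    _ ≤ 2 ^ ((K + 1) * l) := Nat.pow_le_pow_right two_pos (by rw [add_mul, one_mul]; omega)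
    _ ≤ n := h.two_pow_le

theorem HasRoom.shortBound_le_self {n K l : ℕ} (h : HasRoom n K l) : shortBound n ≤ n :=
  (Nat.le_mul_of_pos_left _ two_pos).trans h.two_mul_shortBound_le

theorem eventually_hasRoom : ∀ᶠ n in Filter.atTop, ∃ K l, HasRoom n K l := by
  have hlog : ∀ᶠ n in Filter.atTop, 4 ^ 8 ≤ Nat.log 2 n :=
    Filter.eventually_atTop.mpr ⟨2 ^ 4 ^ 8, fun n hn => Nat.le_log_of_pow_le one_lt_two hn⟩
  filter_upwards [hlog] with n hn
  have hb0 : shortBound n ≠ 0 := by unfold shortBound; omega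
  set h := Nat.log 4 (shortBound n) + 1 with hh
  have hlt : shortBound n < 4 ^ h := Nat.lt_pow_succ_log_self (by norm_num) _
  have hle : 4 ^ h ≤ 4 * shortBound n := by
    rw [hh, pow_succ']
    exact Nat.mul_le_mul_left 4 (Nat.pow_log_le_self 4 hb0)
  have hlin : 48 * h ≤ 2 ^ h := by
    have h9 : 9 ≤ h := Nat.succ_le_succ (Nat.le_log_of_pow_le (by norm_num)
      (hn.trans (Nat.le_mul_of_pos_left _ three_pos)))
    generalize h = m at h9
    induction m, h9 using Nat.le_induction with
    | base => norm_num
    | succ m hm ih => rw [pow_succ]; omega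
  have hpow : 4 ^ h = 2 ^ h * 2 ^ h := by rw [← mul_pow]; rfl
  refine ⟨2 ^ h, 2 * h, by omega, by rwa [pow_mul], ?_, by omega⟩
  have : 12 * ((2 ^ h + 1) * (2 * h)) ≤ 12 * Nat.log 2 n := calc
    12 * ((2 ^ h + 1) * (2 * h)) ≤ 12 * ((2 ^ h + 2 ^ h) * (2 * h)) := by
      gcongr
      exact Nat.one_le_two_pow
    _ = 48 * h * 2 ^ h := by ring
    _ ≤ 2 ^ h * 2 ^ h := by gcongr
    _ ≤ 4 * shortBound n := hpow ▸ hle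
    _ = 12 * Nat.log 2 n := by rw [shortBound]; ring
  omega

end ShortNumbers

section Chains

/-- The binary representation of `w` holds the short number `s` in the block that starts at
position `d`. The block extends over all positions `d + t` for which some short number has a bit
at `t`. -/
def IsBlock (n w d s : ℕ) : Prop :=
  s ≤ shortBound n ∧ ∀ t ≤ n, (∃ x ≤ n, x ≤ shortBound n ∧ x.testBit t) →
    ∃ u ≤ n, d + t = u ∧ (w.testBit u ↔ s.testBit t)

theorem IsBlock.eq {n w d s s' : ℕ} (hs : s ≤ n) (hs' : s' ≤ n) (h : IsBlock n w d s)
    (h' : IsBlock n w d s') : s = s' := by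
  have hagree : ∀ t x, x ≤ n → x ≤ shortBound n → x.testBit t → (s.testBit t ↔ s'.testBit t) := by
    intro t x hx hxb hxt
    have ht := (lt_self_of_testBit hxt).le.trans hx
    obtain ⟨_, -, rfl, hu⟩ := h.2 t ht ⟨x, hx, hxb, hxt⟩
    obtain ⟨_, -, rfl, hu'⟩ := h'.2 t ht ⟨x, hx, hxb, hxt⟩
    exact hu.symm.trans hu'
  exact eq_of_forall_testBit_iff fun t =>
    ⟨fun ht => (hagree t s hs h.1 ht).mp ht, fun ht => (hagree t s' hs' h'.1 ht).mpr ht⟩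

theorem HasRoom.exists_isBlock {n K l : ℕ} (hr : HasRoom n K l) {a : ℕ → ℕ}
    (ha : ∀ i, a i ≤ shortBound n) : ∃ w ≤ n, ∀ i ≤ K, IsBlock n w (i * l) (a i) := by
  refine ⟨ofBitPred ((K + 1) * l) fun p => (a (p / l)).testBit (p % l),
    (ofBitPred_lt _ _).le.trans hr.two_pow_le, fun i hi => ⟨ha i, ?_⟩⟩
  rintro t - ⟨x, -, hx, hxt⟩
  have ht : t < l := (Nat.pow_lt_pow_iff_right one_lt_two).mp
    ((Nat.ge_two_pow_of_testBit hxt).trans_lt (hx.trans_lt hr.shortBound_lt))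
  have hpos : i * l + t < (K + 1) * l := calc
    i * l + t < (i + 1) * l := by rw [add_mul, one_mul]; exact Nat.add_lt_add_left ht _
    _ ≤ (K + 1) * l := Nat.mul_le_mul_right l (Nat.succ_le_succ hi)
  refine ⟨i * l + t, (hpos.trans Nat.lt_two_pow_self).le.trans hr.two_pow_le, rfl, ?_⟩
  rw [testBit_ofBitPred, and_iff_right hpos, mul_comm, Nat.mul_add_div hr.pos, Nat.mul_add_mod,
    Nat.mod_eq_of_lt ht, Nat.div_eq_of_lt ht, add_zero]

/-- The words `w` and `w'` hold at `d` and `e` two pairs of short numbers that are related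
by `Q`. -/
def IsLink (n : ℕ) (Q : ℕ → ℕ → ℕ → ℕ → Prop) (w w' d e : ℕ) : Prop :=
  ∃ j ≤ n, ∃ s ≤ n, ∃ j' ≤ n, ∃ s' ≤ n, (IsBlock n w d j ∧ IsBlock n w' d s) ∧
    (IsBlock n w e j' ∧ IsBlock n w' e s') ∧ Q j s j' s'

/-- The pair `(j', s')` is reachable from `(j, s)` by `Q`-steps between short pairs that are
recorded in two words `w` and `w'`. The set `D` marks the positions of the blocks; each block other
than the initial one continues one further to the left. -/
def HasChain (n : ℕ) (Q : ℕ → ℕ → ℕ → ℕ → Prop) (j s j' s' : ℕ) : Prop :=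
  ∃ w ≤ n, ∃ w' ≤ n, ∃ D ≤ n,
    (∃ d ≤ n, (IsBlock n w d j ∧ IsBlock n w' d s) ∧ D.testBit d ∧
      ∀ e ≤ n, D.testBit e → ¬ e = d → ∃ e' ≤ n, e' < e ∧ D.testBit e' ∧ IsLink n Q w w' e' e) ∧
    ∃ d ≤ n, (IsBlock n w d j' ∧ IsBlock n w' d s') ∧ D.testBit d

theorem HasChain.induction {n : ℕ} {Q : ℕ → ℕ → ℕ → ℕ → Prop} {I : ℕ → ℕ → Prop} {j s j' s' : ℕ}
    (h : HasChain n Q j s j' s') (hj : j ≤ n) (hs : s ≤ n) (hj' : j' ≤ n) (hs' : s' ≤ n)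
    (hstart : I j s)
    (hstep : ∀ a b a' b', a ≤ n → b ≤ n → a' ≤ n → b' ≤ n → a' ≤ shortBound n →
      Q a b a' b' → I a b → I a' b') : I j' s' := by
  obtain ⟨w, -, w', -, D, -, ⟨d₀, -, ⟨hblock_j, hblock_s⟩, -, hlink⟩, d, hd, ⟨hj'd, hs'd⟩, hDd⟩ := h
  induction d using Nat.strong_induction_on generalizing j' s' with
  | _ d ih =>
    by_cases hd₀ : d = d₀
    · subst hd₀
      rwa [hj'd.eq hj' hj hblock_j, hs'd.eq hs' hs hblock_s]
    · obtain ⟨e, he, hed, hDe, a, ha, b, hb, a', ha', b', hb', ⟨hae, hbe⟩, ⟨ha'd, hb'd⟩, hQ⟩ :=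
        hlink d hd hDd hd₀
      rw [hj'd.eq hj' ha' ha'd, hs'd.eq hs' hb' hb'd]
      exact hstep a b a' b' ha hb ha' hb' ha'd.1 hQ (ih e hed ha hb he hDe hae hbe)

theorem testBit_ofBitPred_mod_eq_zero {K l d : ℕ} (hl : 0 < l) :
    (ofBitPred ((K + 1) * l) fun p => p % l = 0).testBit d ↔ ∃ i ≤ K, i * l = d := by
  rw [testBit_ofBitPred]
  constructor
  · rintro ⟨hlt, hmod⟩
    exact ⟨d / l, Nat.lt_succ_iff.mp ((Nat.div_lt_iff_lt_mul hl).mpr hlt),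
      Nat.div_mul_cancel (Nat.dvd_of_mod_eq_zero hmod)⟩
  · rintro ⟨i, hi, rfl⟩
    exact ⟨Nat.mul_lt_mul_of_pos_right (Nat.lt_succ_iff.mpr hi) hl, Nat.mul_mod_left i l⟩

theorem HasRoom.hasChain_of_path {n K l : ℕ} (hr : HasRoom n K l) {Q : ℕ → ℕ → ℕ → ℕ → Prop}
    {a b : ℕ → ℕ} (ha : ∀ i, a i ≤ shortBound n) (hb : ∀ i, b i ≤ shortBound n)
    (hQ : ∀ i < K, Q (a i) (b i) (a (i + 1)) (b (i + 1))) :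
    HasChain n Q (a 0) (b 0) (a K) (b K) := by
  obtain ⟨w, hw, hblock⟩ := hr.exists_isBlock ha
  obtain ⟨w', hw', hblock'⟩ := hr.exists_isBlock hb
  let D := ofBitPred ((K + 1) * l) fun p => p % l = 0
  have hDn : D ≤ n := (ofBitPred_lt _ _).le.trans hr.two_pow_le
  have hD : ∀ i ≤ K, D.testBit (i * l) := fun i hi =>
    (testBit_ofBitPred_mod_eq_zero hr.pos).mpr ⟨i, hi, rfl⟩
  have hle : ∀ i ≤ K, i * l ≤ n := fun i hi => (lt_self_of_testBit (hD i hi)).le.trans hDn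
  have hshort : ∀ {x}, x ≤ shortBound n → x ≤ n := fun hx => hx.trans hr.shortBound_le_self
  refine ⟨w, hw, w', hw', D, hDn, ⟨0 * l, hle 0 K.zero_le, ⟨hblock 0 K.zero_le,
    hblock' 0 K.zero_le⟩, hD 0 K.zero_le, fun e _ he hne => ?_⟩, K * l, hle K le_rfl,
    ⟨hblock K le_rfl, hblock' K le_rfl⟩, hD K le_rfl⟩
  obtain ⟨_ | i, hi, rfl⟩ := (testBit_ofBitPred_mod_eq_zero hr.pos).mp he
  · exact absurd rfl hne
  · have hi' := (Nat.lt_of_succ_le hi).le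
    exact ⟨i * l, hle i hi', Nat.mul_lt_mul_of_pos_right i.lt_succ_self hr.pos, hD i hi',
      _, hshort (ha i), _, hshort (hb i), _, hshort (ha (i + 1)), _, hshort (hb (i + 1)),
      ⟨hblock i hi', hblock' i hi'⟩, ⟨hblock _ hi, hblock' _ hi⟩, hQ i hi⟩

theorem HasRoom.hasChain_graph {n K l : ℕ} (hr : HasRoom n K l) {Q : ℕ → ℕ → ℕ → ℕ → Prop}
    {F : ℕ → ℕ} (hF : ∀ j ≤ shortBound n, F j ≤ shortBound n) {W : ℕ}
    (hQ : ∀ j j', j ≤ j' → j' ≤ shortBound n → j' ≤ j + W → Q j (F j) j' (F j')) {j j' : ℕ}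
    (hjj' : j ≤ j') (hj' : j' ≤ shortBound n) (hW : j' ≤ j + W * K) :
    HasChain n Q j (F j) j' (F j') := by
  let a (i : ℕ) : ℕ := min (j + W * i) j'
  have ha : ∀ i, a i ≤ shortBound n := fun i => (min_le_right _ _).trans hj'
  have ha0 : a 0 = j := by simp [a, hjj']
  have haK : a K = j' := min_eq_right hW
  have h := hr.hasChain_of_path (Q := Q) ha (fun i => hF _ (ha i)) fun i _ =>
    hQ (a i) (a (i + 1)) (by simp only [a, mul_add]; omega) (ha _)
      (by simp only [a, mul_add]; omega)
  rwa [ha0, haK] at h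

variable {α β : Type*}

theorem prefixDefinable_isBlock (w d s : α) :
    PrefixDefinable bitStruct fun n v => IsBlock n (v w) (v d) (v s) :=
  and (prefixDefinable_le_shortBound _) (forall_le (imp (exists_le (and
    (prefixDefinable_le_shortBound _) (testBit _ _))) (exists_le (and (add_eq _ _ _)
      (iff (testBit _ _) (testBit _ _))))))

theorem prefixDefinable_isLink {Q : ℕ → (α → ℕ) → ℕ → ℕ → ℕ → ℕ → Prop}
    (hQ : PrefixDefinable bitStruct fun n (v : α ⊕ Fin 4 → ℕ) => Q n (fun a => v (.inl a))
      (v (.inr 0)) (v (.inr 1)) (v (.inr 2)) (v (.inr 3))) (f : α → β) (w w' d e : β) :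
    PrefixDefinable bitStruct fun n v =>
      IsLink n (Q n fun a => v (f a)) (v w) (v w') (v d) (v e) :=
  have hblock {γ : Type _} (w d s : γ) := prefixDefinable_isBlock w d s
  exists_le (exists_le (exists_le (exists_le (and (and (hblock _ _ _) (hblock _ _ _))
    (and (and (hblock _ _ _) (hblock _ _ _)) (hQ.rename (Sum.elim (some ∘ some ∘ some ∘ some ∘ f)
      ![some (some (some none)), some (some none), some none, none])))))))

theorem prefixDefinable_hasChain {Q : ℕ → (α → ℕ) → ℕ → ℕ → ℕ → ℕ → Prop}
    (hQ : PrefixDefinable bitStruct fun n (v : α ⊕ Fin 4 → ℕ) => Q n (fun a => v (.inl a))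
      (v (.inr 0)) (v (.inr 1)) (v (.inr 2)) (v (.inr 3))) (f : α → β) (j s j' s' : β) :
    PrefixDefinable bitStruct fun n v =>
      HasChain n (Q n fun a => v (f a)) (v j) (v s) (v j') (v s') :=
  have hblock {γ : Type _} (w d s : γ) := prefixDefinable_isBlock w d s
  exists_le (exists_le (exists_le (and (exists_le (and (and (hblock _ _ _) (hblock _ _ _))
    (and (testBit _ _) (forall_le (imp (testBit _ _) (imp (eq _ _).not (exists_le (and (lt _ _)
      (and (testBit _ _) (prefixDefinable_isLink hQ
        (some ∘ some ∘ some ∘ some ∘ some ∘ some ∘ f) _ _ _ _))))))))))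
    (exists_le (and (and (hblock _ _ _) (hblock _ _ _)) (testBit _ _))))))

end Chains

section Recursion

/-- One step of the computation of a function whose successive values are related by `G`; the step
may also be idle. -/
def recStep (G : ℕ → ℕ → ℕ → Prop) (j s j' s' : ℕ) : Prop :=
  j = j' ∧ s = s' ∨ j + 1 = j' ∧ G j s s'

theorem HasRoom.hasChain_hasChain_recStep_iff {n K l : ℕ} (hr : HasRoom n K l) {F : ℕ → ℕ}
    {G : ℕ → ℕ → ℕ → Prop} (hF0 : F 0 = 0) (hFle : ∀ j, F j ≤ j)
    (hG : ∀ j s, j + 1 ≤ shortBound n → s ≤ n → (G j (F j) s ↔ s = F (j + 1)))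
    {j s : ℕ} (hj : j ≤ n) (hs : s ≤ n) :
    HasChain n (HasChain n (recStep G)) 0 0 j s ↔ j ≤ shortBound n ∧ s = F j := by
  have hFshort : ∀ j ≤ shortBound n, F j ≤ shortBound n := fun j => (hFle j).trans
  constructor
  · intro h
    refine h.induction (I := fun j s => j ≤ shortBound n ∧ s = F j) n.zero_le n.zero_le hj hs
      ⟨Nat.zero_le _, hF0.symm⟩ fun a b a' b' ha hb ha' hb' _ hchain hI => ?_
    refine hchain.induction (I := fun j s => j ≤ shortBound n ∧ s = F j) ha hb ha' hb' hI ?_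
    rintro c _ c' d' - - - hd' hc' (⟨rfl, rfl⟩ | ⟨rfl, hGd⟩) ⟨hc, rfl⟩
    · exact ⟨hc, rfl⟩
    · exact ⟨hc', (hG c d' hc' hd').mp hGd⟩
  · rintro ⟨hjb, rfl⟩
    have hstep : ∀ i i', i ≤ i' → i' ≤ shortBound n → i' ≤ i + 1 →
        recStep G i (F i) i' (F i') := by
      intro i i' hi hi' hle
      rcases hi.eq_or_lt with rfl | hlt
      · exact Or.inl ⟨rfl, rfl⟩
      · obtain rfl : i + 1 = i' := by omega
        exact Or.inr ⟨rfl, (hG i _ hi' (hFshort _ hi' |>.trans hr.shortBound_le_self)).mpr rfl⟩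
    have hchain := hr.hasChain_graph hFshort (W := K) (fun i i' hi hi' hle =>
      hr.hasChain_graph hFshort hstep hi hi' (by rwa [one_mul])) j.zero_le hjb
      (by rw [zero_add]; exact hjb.trans hr.shortBound_le)
    rwa [hF0] at hchain

variable {α β : Type*}

/-- Inside `{0, ..., n}` a recursion of length `shortBound n` is evaluated by a sequence of
sequences, because a number `≤ n` has too few bits to hold all of its values at once. -/
theorem prefixDefinable_rec [Finite α] {F : (α → ℕ) → ℕ → ℕ} {G : ℕ → (α → ℕ) → ℕ → ℕ → ℕ → Prop}
    (hF0 : ∀ v, F v 0 = 0) (hFle : ∀ v j, F v j ≤ j)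
    (hGdef : PrefixDefinable bitStruct fun n (v : α ⊕ Fin 3 → ℕ) =>
      G n (fun a => v (.inl a)) (v (.inr 0)) (v (.inr 1)) (v (.inr 2)))
    (hG : ∀ n v j s, 2 * shortBound n ≤ n → (∀ a, v a ≤ n) → j + 1 ≤ shortBound n → s ≤ n →
      (G n v j (F v j) s ↔ s = F v (j + 1)))
    (f : α → β) (j s : β) :
    PrefixDefinable bitStruct fun n v =>
      v j ≤ shortBound n ∧ v s = F (fun a => v (f a)) (v j) := by
  obtain ⟨N, hN⟩ := Filter.eventually_atTop.mp eventually_hasRoom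
  have hstep : PrefixDefinable bitStruct fun n (v : α ⊕ Fin 4 → ℕ) =>
      recStep (G n fun a => v (.inl a)) (v (.inr 0)) (v (.inr 1)) (v (.inr 2)) (v (.inr 3)) :=
    or (and (eq _ _) (eq _ _)) (and (add_const _ _ 1)
      (hGdef.rename (Sum.elim Sum.inl ![Sum.inr 0, Sum.inr 1, Sum.inr 3])))
  have hchain : PrefixDefinable bitStruct fun n (v : α ⊕ Fin 2 → ℕ) => ∃ z ≤ n, z = 0 ∧
      HasChain n (HasChain n (recStep (G n fun a => v (.inl a)))) z z (v (.inr 0)) (v (.inr 1)) :=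
    exists_le (and (eq_const _ 0) (prefixDefinable_hasChain
      (Q := fun n v => HasChain n (recStep (G n v)))
      (prefixDefinable_hasChain (Q := fun n v => recStep (G n v)) hstep Sum.inl _ _ _ _)
      (some ∘ Sum.inl) _ _ _ _))
  have hgraph : PrefixDefinable bitStruct fun n (v : α ⊕ Fin 2 → ℕ) =>
      v (.inr 0) ≤ shortBound n ∧ v (.inr 1) = F (fun a => v (.inl a)) (v (.inr 0)) := by
    refine of_eventually_iff N hchain fun n v hn hv => ?_
    obtain ⟨K, l, hr⟩ := hN n hn
    rw [← hr.hasChain_hasChain_recStep_iff (hF0 _) (hFle _)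
      (fun j s => hG n _ j s hr.two_mul_shortBound_le fun a => hv (.inl a))
      (hv (.inr 0)) (hv (.inr 1))]
    exact ⟨fun h => ⟨0, n.zero_le, rfl, h⟩, fun ⟨_, _, h0, h⟩ => h0 ▸ h⟩
  exact hgraph.rename (Sum.elim f ![j, s])

end Recursion

section Multiplication

variable {α β : Type*}

theorem prefixDefinable_count [Finite α] {p : (α → ℕ) → ℕ → Prop} [∀ v, DecidablePred (p v)]
    (hp : PrefixDefinable bitStruct fun _ (v : α ⊕ Fin 1 → ℕ) =>
      p (fun a => v (.inl a)) (v (.inr 0))) (f : α → β) (j s : β) :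
    PrefixDefinable bitStruct fun n v =>
      v j ≤ shortBound n ∧ v s = Nat.count (p fun a => v (f a)) (v j) := by
  have hp' := hp.rename (Sum.map id ![(0 : Fin 3)])
  refine prefixDefinable_rec (F := fun v => Nat.count (p v))
    (G := fun _ v j s s' => p v j ∧ s + 1 = s' ∨ ¬ p v j ∧ s = s') (fun v => Nat.count_zero _)
    (fun v j => Nat.count_le _) (or (and hp' (add_const _ _ 1)) (and hp'.not (eq _ _))) ?_ f j s
  intro n v j s _ _ _ _
  rw [Nat.count_succ]
  split_ifs with h <;> simp [h, eq_comm]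

/-- The sum of the products of binary digits of `x` and `y` that contribute to the digit of `x * y`
at position `m`. -/
def mulColumn (x y m : ℕ) : ℕ :=
  Nat.count (fun k => k ≤ m ∧ x.testBit k ∧ y.testBit (m - k)) (m + 1)

/-- The carry into position `m` in the schoolbook multiplication of `x` and `y`. -/
def mulCarry (x y : ℕ) : ℕ → ℕ
  | 0 => 0
  | m + 1 => (mulCarry x y m + mulColumn x y m) / 2

theorem mulColumn_eq_sum (x y m : ℕ) : mulColumn x y m =
    ∑ k ∈ Finset.range (m + 1), (x.testBit k).toNat * (y.testBit (m - k)).toNat := by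
  rw [mulColumn, Nat.count_eq_card_filter_range, Finset.card_filter]
  refine Finset.sum_congr rfl fun k hk => ?_
  have hk : k ≤ m := Nat.lt_succ_iff.mp (Finset.mem_range.mp hk)
  cases x.testBit k <;> cases y.testBit (m - k) <;> simp [hk]

theorem mulColumn_le (x y m : ℕ) : mulColumn x y m ≤ m + 1 := Nat.count_le _

theorem mulCarry_le (x y m : ℕ) : mulCarry x y m ≤ m := by
  induction m with
  | zero => exact le_rfl
  | succ m ih =>
    have := mulColumn_le x y m
    rw [mulCarry]
    omega

theorem div_two_pow_eq (x k : ℕ) : x / 2 ^ k = (x.testBit k).toNat + 2 * (x / 2 ^ (k + 1)) := by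
  rw [Nat.toNat_testBit, pow_succ, ← Nat.div_div_eq_div_mul, Nat.mod_add_div]

/-- The contribution to `x * y / 2 ^ m` of the digit products at positions `≥ m`, that is, without
the carry. -/
def mulUpper (x y m : ℕ) : ℕ :=
  ∑ k ∈ Finset.range m, (x.testBit k).toNat * (y / 2 ^ (m - k)) + x / 2 ^ m * y

theorem mulUpper_eq (x y m : ℕ) : mulUpper x y m = mulColumn x y m + 2 * mulUpper x y (m + 1) := by
  have hlast : mulUpper x y m = ∑ k ∈ Finset.range (m + 1),
      (x.testBit k).toNat * (y / 2 ^ (m - k)) + 2 * (x / 2 ^ (m + 1)) * y := by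
    rw [mulUpper, Finset.sum_range_succ, Nat.sub_self, pow_zero, Nat.div_one, div_two_pow_eq x m]
    ring
  rw [hlast, mulColumn_eq_sum, mulUpper, mul_add, Finset.mul_sum, ← add_assoc,
    ← Finset.sum_add_distrib, mul_assoc]
  congr 1
  refine Finset.sum_congr rfl fun k hk => ?_
  rw [div_two_pow_eq y (m - k),
    Nat.sub_add_comm (Nat.lt_succ_iff.mp (Finset.mem_range.mp hk))]
  ring

theorem mul_div_two_pow (x y m : ℕ) : x * y / 2 ^ m = mulCarry x y m + mulUpper x y m := by
  induction m with
  | zero => simp [mulCarry, mulUpper]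
  | succ m ih =>
    rw [pow_succ, ← Nat.div_div_eq_div_mul, ih, mulUpper_eq, mulCarry]
    omega

theorem testBit_mul_iff (x y m : ℕ) :
    (x * y).testBit m ↔ (mulCarry x y m + mulColumn x y m) % 2 = 1 := by
  rw [Nat.testBit_eq_decide_div_mod_eq, decide_eq_true_iff, mul_div_two_pow, mulUpper_eq,
    ← add_assoc, Nat.add_mul_mod_self_left]

theorem prefixDefinable_mulColumn (x y m j s : β) : PrefixDefinable bitStruct fun n v =>
    v m + 1 = v j ∧ v j ≤ shortBound n ∧ v s = mulColumn (v x) (v y) (v m) := by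
  have hp : PrefixDefinable bitStruct fun _ (v : Fin 3 ⊕ Fin 1 → ℕ) =>
      v (.inr 0) ≤ v (.inl 2) ∧ (v (.inl 0)).testBit (v (.inr 0)) ∧
        (v (.inl 1)).testBit (v (.inl 2) - v (.inr 0)) := by
    have h : PrefixDefinable bitStruct fun n (v : Fin 3 ⊕ Fin 1 → ℕ) => ∃ i ≤ n,
        i + v (.inr 0) = v (.inl 2) ∧ (v (.inl 0)).testBit (v (.inr 0)) ∧
          (v (.inl 1)).testBit i :=
      exists_le (and (add_eq _ _ _) (and (testBit _ _) (testBit _ _)))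
    refine h.of_iff fun n v hv => ⟨fun ⟨hk, hx, hy⟩ => ?_, ?_⟩
    · exact ⟨_, (Nat.sub_le _ _).trans (hv _), Nat.sub_add_cancel hk, hx, hy⟩
    · rintro ⟨i, -, hi, hx, hy⟩
      rw [← hi, Nat.add_sub_cancel]
      exact ⟨Nat.le_add_left _ _, hx, hy⟩
  refine (and (add_const m j 1) (prefixDefinable_count
    (p := fun v k => k ≤ v 2 ∧ (v 0).testBit k ∧ (v 1).testBit (v 2 - k)) hp ![x, y, m] j s)).of_iff
    fun n v _ => and_congr_right fun hj => ?_
  rw [← hj]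
  rfl

theorem prefixDefinable_mulCarry (x y m s : β) : PrefixDefinable bitStruct fun n v =>
    v m ≤ shortBound n ∧ v s = mulCarry (v x) (v y) (v m) := by
  refine prefixDefinable_rec (F := fun v : Fin 2 → ℕ => mulCarry (v 0) (v 1))
    (G := fun n v j s s' => ∃ j' ≤ n, ∃ t ≤ n,
      (j + 1 = j' ∧ j' ≤ shortBound n ∧ t = mulColumn (v 0) (v 1) j) ∧
        ∃ u ≤ n, s + t = u ∧ ∃ h ≤ n, s' + s' = h ∧ (h = u ∨ h + 1 = u))
    (fun v => rfl) (fun v j => mulCarry_le _ _ _)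
    (exists_le (exists_le (and (prefixDefinable_mulColumn _ _ _ _ _) (exists_le (and (add_eq _ _ _)
      (exists_le (and (add_eq _ _ _) (or (eq _ _) (add_const _ _ 1)))))))))
    (fun n v j s hn _ hj _ => ?_) ![x, y] m s
  have hcarry := mulCarry_le (v 0) (v 1) j
  have hcolumn := mulColumn_le (v 0) (v 1) j
  rw [mulCarry]
  constructor
  · rintro ⟨_, -, _, -, ⟨rfl, -, rfl⟩, _, -, rfl, _, -, rfl, h⟩
    omega
  · rintro rfl
    exact ⟨j + 1, by omega, _, by omega, ⟨rfl, hj, rfl⟩, _, by omega, rfl, _, by omega, rfl,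
      by omega⟩

/-- The digit of `x * y` at position `m` is one, expressed by quantifiers over `{0, ..., n}`. Here
`j` stands for `m + 1`. -/
def IsMulBit (n x y m j : ℕ) : Prop :=
  ∃ s ≤ n, ∃ t ≤ n, (m ≤ shortBound n ∧ s = mulCarry x y m) ∧
    (m + 1 = j ∧ j ≤ shortBound n ∧ t = mulColumn x y m) ∧
      ∃ u ≤ n, s + t = u ∧ ∃ h ≤ n, ∃ h' ≤ n, h + h = h' ∧ h' + 1 = u

theorem prefixDefinable_isMulBit (x y m j : β) :
    PrefixDefinable bitStruct fun n v => IsMulBit n (v x) (v y) (v m) (v j) :=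
  exists_le (exists_le (and (prefixDefinable_mulCarry _ _ _ _) (and
    (prefixDefinable_mulColumn _ _ _ _ _) (exists_le (and (add_eq _ _ _)
      (exists_le (exists_le (and (add_eq _ _ _) (add_const _ _ 1)))))))))

theorem isMulBit_iff_testBit {n x y m : ℕ} (hn : 2 * shortBound n ≤ n) (hm : m + 1 ≤ shortBound n) :
    IsMulBit n x y m (m + 1) ↔ (x * y).testBit m := by
  have hcarry := mulCarry_le x y m
  have hcolumn := mulColumn_le x y m
  rw [testBit_mul_iff]
  constructor
  · rintro ⟨_, -, _, -, ⟨-, rfl⟩, ⟨-, -, rfl⟩, _, -, rfl, h, -, _, -, rfl, hodd⟩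
    omega
  · intro hodd
    exact ⟨_, by omega, _, by omega, ⟨by omega, rfl⟩, ⟨rfl, hm, rfl⟩, _, by omega, rfl,
      (mulCarry x y m + mulColumn x y m) / 2, by omega, _, by omega, rfl, by omega⟩

theorem lt_shortBound_of_testBit_mul {n x y m : ℕ} (hn : 4 ≤ n) (hx : x ≤ n) (hy : y ≤ n)
    (h : (x * y).testBit m) : m < shortBound n := by
  have hlog : 2 ≤ Nat.log 2 n := Nat.le_log_of_pow_le one_lt_two hn
  have hlt : n < 2 ^ (Nat.log 2 n + 1) := Nat.lt_pow_succ_log_self one_lt_two n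
  have hm : m < (Nat.log 2 n + 1) + (Nat.log 2 n + 1) := by
    rw [← Nat.pow_lt_pow_iff_right one_lt_two, pow_add]
    exact (Nat.ge_two_pow_of_testBit h).trans_lt
      (Nat.mul_lt_mul'' (hx.trans_lt hlt) (hy.trans_lt hlt))
  rw [shortBound]
  omega

theorem mul_eq_iff_forall_testBit {n x y z : ℕ} (hn : 2 * shortBound n ≤ n) (hn' : 4 ≤ n)
    (hx : x ≤ n) (hy : y ≤ n) (hz : z ≤ n) : x * y = z ↔
      ∀ m ≤ n, ∀ j ≤ n, m + 1 = j → j ≤ shortBound n → (z.testBit m ↔ IsMulBit n x y m j) := by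
  constructor
  · rintro rfl m - _ - rfl hm
    exact (isMulBit_iff_testBit hn hm).symm
  · intro h
    refine eq_of_forall_testBit_iff fun m => ?_
    by_cases hm : m + 1 ≤ shortBound n
    · rw [h m (by omega) (m + 1) (by omega) rfl hm, isMulBit_iff_testBit hn hm]
    · refine iff_of_false (fun hbit => hm (lt_shortBound_of_testBit_mul hn' hx hy hbit))
        fun hbit => hm (lt_shortBound_of_testBit_mul (y := 1) hn' hz (by omega) ?_)
      rwa [mul_one]

theorem PrefixDefinable.mul_eq (a b c : β) :
    PrefixDefinable bitStruct fun _ v => v a * v b = v c := by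
  obtain ⟨N, hN⟩ := Filter.eventually_atTop.mp
    (eventually_hasRoom.and (Filter.eventually_ge_atTop 4))
  have hbits : PrefixDefinable bitStruct fun n (v : Fin 3 → ℕ) => ∀ m ≤ n, ∀ j ≤ n, m + 1 = j →
      j ≤ shortBound n → ((v 2).testBit m ↔ IsMulBit n (v 0) (v 1) m j) :=
    forall_le (forall_le (imp (add_const _ _ 1) (imp (prefixDefinable_le_shortBound _)
      (iff (testBit _ _) (prefixDefinable_isMulBit _ _ _ _)))))
  have h : PrefixDefinable bitStruct fun _ (v : Fin 3 → ℕ) => v 0 * v 1 = v 2 := by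
    refine of_eventually_iff N hbits fun n v hn hv => ?_
    obtain ⟨⟨K, l, hr⟩, hn'⟩ := hN n hn
    exact mul_eq_iff_forall_testBit hr.two_mul_shortBound_le hn' (hv 0) (hv 1) (hv 2)
  exact h.rename ![a, b, c]

end Multiplication

section DefinabilityFromBit

theorem qseq_eq_iff {c q : ℕ} : qseq c = q ↔
    ∃ h t, c * h + t = q ∧ (h + h = c ∧ t = h ∨ h + h + 1 = c ∧ t = c) := by
  have heven (h : ℕ) : qseq (h + h) = (h + h) * h + h := by
    rw [qseq, ← two_mul, mul_assoc, Nat.mul_div_cancel_left _ two_pos]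
    ring
  have hodd (h : ℕ) : qseq (h + h + 1) = (h + h + 1) * h + (h + h + 1) := by
    rw [qseq, show (h + h + 1) * (h + h + 1 + 1) = 2 * ((h + h + 1) * (h + 1)) by ring,
      Nat.mul_div_cancel_left _ two_pos]
    ring
  constructor
  · rintro rfl
    obtain ⟨h, rfl | rfl⟩ := Nat.even_or_odd' c
    · exact ⟨h, h, by rw [two_mul, heven], Or.inl ⟨(two_mul h).symm, rfl⟩⟩
    · exact ⟨h, _, by rw [two_mul, hodd], Or.inr ⟨by rw [two_mul], rfl⟩⟩
  · rintro ⟨h, t, rfl, ⟨rfl, rfl⟩ | ⟨rfl, rfl⟩⟩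
    exacts [heven _, hodd _]

variable {α : Type*}

theorem prefixDefinable_bitStruct_qseq_eq (c q : α) :
    PrefixDefinable bitStruct fun _ v => qseq (v c) = v q := by
  have h : PrefixDefinable bitStruct fun n v => ∃ h ≤ n, ∃ t ≤ n,
      (∃ p ≤ n, v c * h = p ∧ p + t = v q) ∧
        ((h + h = v c ∧ t = h) ∨ (∃ h' ≤ n, h + h = h' ∧ h' + 1 = v c) ∧ t = v c) :=
    exists_le (exists_le (and (exists_le (and (mul_eq _ _ _) (add_eq _ _ _)))
      (or (and (add_eq _ _ _) (eq _ _))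
        (and (exists_le (and (add_eq _ _ _) (add_const _ _ 1))) (eq _ _)))))
  refine h.of_iff fun n v hv => qseq_eq_iff.trans ?_
  have hc := hv c
  have hq := hv q
  constructor
  · rintro ⟨h, t, hsum, ht | ht⟩
    · exact ⟨h, by omega, t, by omega, ⟨_, by omega, rfl, hsum⟩, Or.inl ht⟩
    · exact ⟨h, by omega, t, by omega, ⟨_, by omega, rfl, hsum⟩,
        Or.inr ⟨⟨_, by omega, rfl, ht.1⟩, ht.2⟩⟩
  · rintro ⟨h, -, t, -, ⟨_, -, rfl, hsum⟩, ht | ⟨⟨_, -, rfl, hodd⟩, ht⟩⟩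
    · exact ⟨h, t, hsum, Or.inl ht⟩
    · exact ⟨h, t, hsum, Or.inr ⟨hodd, ht⟩⟩

theorem prefixDefinable_bitStruct_col_rowf {P : ℕ → (α → ℕ) → ℕ → ℕ → Prop} (a : α)
    (hP : PrefixDefinable (α := Option (Option α)) bitStruct fun n w =>
      P n (fun b => w (some (some b))) (w (some none)) (w none)) :
    PrefixDefinable bitStruct fun n v => P n v (col (v a)) (rowf (v a)) := by
  have h : PrefixDefinable bitStruct fun n v => ∃ c ≤ n, ∃ r ≤ n,
      (r ≤ c ∧ ∃ q ≤ n, qseq c = q ∧ q + r = v a) ∧ P n v c r :=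
    exists_le (exists_le (and (and (le _ _) (exists_le (and
      (prefixDefinable_bitStruct_qseq_eq _ _) (add_eq _ _ _)))) hP))
  refine h.of_iff fun n v hv => ⟨fun hPa => ?_, ?_⟩
  · have ha := hv a
    have hsum := qseq_col_add_rowf (v a)
    have hcol := self_le_qseq (col (v a))
    exact ⟨_, by omega, _, by omega, ⟨rowf_le_col _, _, by omega, rfl, hsum⟩, hPa⟩
  · rintro ⟨c, -, r, -, ⟨hrc, _, -, rfl, hsum⟩, hPcr⟩
    rwa [← hsum, col_qseq_add hrc, rowf_qseq_add hrc]

theorem prefixDefinable_bitStruct_isMarker (M : ℕ) (a : α) :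
    PrefixDefinable bitStruct fun _ v => IsMarker M (v a) :=
  prefixDefinable_bitStruct_col_rowf (P := fun _ _ c r => r = 0 ∧ M ≤ c ∧ c < 2 * M) a
    (and (eq_const _ 0) (and ((lt_const _ M).not.of_iff fun _ _ _ => not_lt.symm)
      (lt_const _ (2 * M))))

theorem prefixDefinable_bitStruct_isLeader (M : ℕ) (a : α) :
    PrefixDefinable bitStruct fun _ v => IsLeader M (v a) := by
  have h : PrefixDefinable bitStruct fun _ v => ∃ i < M, rowf (v a) + i = col (v a) :=
    exists_lt M fun i => prefixDefinable_bitStruct_col_rowf (P := fun _ _ c r => r + i = c) a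
      (add_const _ _ i)
  refine h.of_iff fun n v _ => ?_
  have hle := rowf_le_col (v a)
  rw [IsLeader]
  constructor
  · exact fun hlt => ⟨col (v a) - rowf (v a), by omega, Nat.add_sub_cancel' hle⟩
  · rintro ⟨i, hi, heq⟩
    omega

theorem eq_leader_iff_col_rowf {M : ℕ} {e : ℕ → ℕ} (he : ∀ x, e x < M) {x l : ℕ} :
    l = leader M e x ↔ (IsMarker M x ∨ IsLeader M x) ∧ l = x ∨ ¬ (IsMarker M x ∨ IsLeader M x) ∧
      ∃ i < M, e x = i ∧ rowf l = rowf x ∧ rowf l + i = col l := by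
  by_cases hx : IsMarker M x ∨ IsLeader M x
  · simp only [hx, leader, if_true, true_and, not_true, false_and, or_false]
  simp only [hx, false_and, false_or, not_false_iff, true_and]
  obtain ⟨hm, hl⟩ := not_or.mp hx
  constructor
  · rintro rfl
    exact ⟨e x, he x, rfl, rowf_leader x, by rw [rowf_leader, col_leader_of_not hm hl]⟩
  · rintro ⟨_, -, rfl, hrow, hcol⟩
    refine eq_of_col_eq_of_rowf_eq ?_ (hrow.trans (rowf_leader x).symm)
    rw [col_leader_of_not hm hl, ← hcol, hrow]

variable {M : ℕ} {e : ℕ → ℕ} (he : ∀ x, e x < M)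
  (hcolor : ∀ i, PrefixDefinable bitStruct fun _ (v : Fin 1 → ℕ) => e (v 0) = i)
include he hcolor

theorem prefixDefinable_bitStruct_eq_leader (l x : α) :
    PrefixDefinable bitStruct fun _ v => v l = leader M e (v x) :=
  have hml := or (prefixDefinable_bitStruct_isMarker M x) (prefixDefinable_bitStruct_isLeader M x)
  have hrow : PrefixDefinable bitStruct fun _ v => rowf (v l) = rowf (v x) :=
    prefixDefinable_bitStruct_col_rowf (P := fun _ v _ r => r = rowf (v x)) l
      (prefixDefinable_bitStruct_col_rowf (P := fun _ w _ r => w none = r) (some (some x))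
        (eq _ _))
  have hcol (i : ℕ) : PrefixDefinable bitStruct fun _ v => rowf (v l) + i = col (v l) :=
    prefixDefinable_bitStruct_col_rowf (P := fun _ _ c r => r + i = c) l (add_const _ _ i)
  (or (and hml (eq _ _)) (and hml.not (exists_lt M fun i =>
    and ((hcolor i).rename ![x]) (and hrow (hcol i))))).of_iff fun _ _ _ =>
      eq_leader_iff_col_rowf he

theorem prefixDefinable_bitStruct_level_eq (a : α) (c : ℕ) :
    PrefixDefinable bitStruct fun _ v => level M e (v a) = c := by
  have hm := prefixDefinable_bitStruct_isMarker M a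
  have hcol (i : ℕ) : PrefixDefinable bitStruct fun _ v => col (v a) = i :=
    prefixDefinable_bitStruct_col_rowf (P := fun _ _ c _ => c = i) a (eq_const _ i)
  have hleader (i : ℕ) : PrefixDefinable bitStruct fun _ v => e (leader M e (v a)) = i :=
    subst (prefixDefinable_bitStruct_eq_leader he hcolor 1 0) (leader_le he)
      (P := fun _ _ l => e l = i) a ((hcolor i).rename ![none])
  refine (exists_lt M fun i => or (and (const (2 * i = c)) (and hm (hcol (M + i))))
    (and (const (2 * i + 1 = c)) (and hm.not (hleader i)))).of_iff fun n v _ => ?_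
  unfold level
  split_ifs with hmarker
  · simp only [hmarker, true_and, not_true, false_and, and_false, or_false]
    refine ⟨fun h => ⟨col (v a) - M, ?_, h, ?_⟩, ?_⟩
    · have := hmarker.2; omega
    · have := hmarker.2; omega
    · rintro ⟨i, -, rfl, hi⟩
      rw [hi, Nat.add_sub_cancel_left]
  · simp only [hmarker, false_and, and_false, false_or, not_false_iff, true_and]
    exact ⟨fun h => ⟨_, he _, h, rfl⟩, fun ⟨_, _, h, hi⟩ => hi ▸ h⟩

theorem prefixDefinable_bitStruct_encodingOrder (a b : α) :
    PrefixDefinable bitStruct fun _ v => encodingOrder M e (v a) (v b) := by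
  have hlevel {γ : Type _} (c : γ) (i : ℕ) := prefixDefinable_bitStruct_level_eq he hcolor c i
  have hleader {γ : Type _} (l x : γ) := prefixDefinable_bitStruct_eq_leader he hcolor l x
  have h : PrefixDefinable bitStruct fun n v =>
      ∃ i < 2 * M, ∃ j < 2 * M, (level M e (v a) = i ∧ level M e (v b) = j) ∧ (i < j ∨ i = j ∧
        ∃ l ≤ n, ∃ m ≤ n, (l = leader M e (v a) ∧ m = leader M e (v b)) ∧
          (m < l ∨ l = m ∧ v a < v b)) :=
    exists_lt _ fun i => exists_lt _ fun j => and (and (hlevel a i) (hlevel b j))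
      (or (const (i < j)) (and (const (i = j)) (exists_le (exists_le (and
        (and (hleader _ _) (hleader _ _)) (or (lt _ _) (and (eq _ _) (lt _ _))))))))
  refine h.of_iff fun n v hv => ⟨fun hlt => ?_, ?_⟩
  · exact ⟨_, level_lt he _, _, level_lt he _, ⟨rfl, rfl⟩, hlt.imp_right (And.imp_right fun h =>
      ⟨_, (leader_le he _).trans (hv a), _, (leader_le he _).trans (hv b), ⟨rfl, rfl⟩, h⟩)⟩
  · rintro ⟨_, -, _, -, ⟨rfl, rfl⟩, hlt⟩
    refine hlt.imp_right (And.imp_right ?_)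
    rintro ⟨_, -, _, -, ⟨rfl, rfl⟩, h⟩
    exact h

end DefinabilityFromBit

section MembershipColor

variable {k : ℕ} (U : Fin k → Set ℕ)

/-- The color that codes as a binary number to which of the sets `U i` the number `x` belongs. -/
noncomputable def membershipColor (x : ℕ) : ℕ :=
  ofBitPred k fun i => ∃ h : i < k, x ∈ U ⟨i, h⟩

theorem membershipColor_lt (x : ℕ) : membershipColor U x < 2 ^ k := ofBitPred_lt _ _

theorem testBit_membershipColor (x : ℕ) (i : Fin k) :
    (membershipColor U x).testBit i ↔ x ∈ U i := by
  rw [membershipColor, testBit_ofBitPred]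
  exact ⟨fun ⟨_, _, h⟩ => h, fun h => ⟨i.2, i.2, h⟩⟩

theorem membershipColor_eq_iff {x c : ℕ} :
    membershipColor U x = c ↔ c < 2 ^ k ∧ ∀ i : Fin k, (c.testBit i ↔ x ∈ U i) := by
  constructor
  · rintro rfl
    exact ⟨membershipColor_lt U x, testBit_membershipColor U x⟩
  · rintro ⟨hc, hbit⟩
    refine eq_of_forall_testBit_iff fun i => ?_
    by_cases hi : i < k
    · exact (testBit_membershipColor U x ⟨i, hi⟩).trans (hbit ⟨i, hi⟩).symm
    · have hlt {y : ℕ} (hy : y < 2 ^ k) : ¬ y.testBit i := fun h =>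
        hi ((Nat.pow_lt_pow_iff_right one_lt_two).mp ((Nat.ge_two_pow_of_testBit h).trans_lt hy))
      exact iff_of_false (hlt (membershipColor_lt U x)) (hlt hc)

theorem prefixDefinable_membershipColor_eq {L : Language}
    {S : ∀ n, L.Structure (Fin (n + 1))}
    (hU : ∀ i, PrefixDefinable S fun _ (v : Fin 1 → ℕ) => v 0 ∈ U i) (c : ℕ) :
    PrefixDefinable S fun _ (v : Fin 1 → ℕ) => membershipColor U (v 0) = c :=
  (PrefixDefinable.and (const (c < 2 ^ k))
    (iForall fun i : Fin k => iff (const (c.testBit i)) (hU i))).of_iff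
    fun _ _ _ => membershipColor_eq_iff U

theorem prefixDefinable_mem_of_membershipColor_eq {L : Language}
    {S : ∀ n, L.Structure (Fin (n + 1))}
    (hcolor : ∀ c, PrefixDefinable S fun _ (v : Fin 1 → ℕ) => membershipColor U (v 0) = c)
    (i : Fin k) : PrefixDefinable S fun _ (v : Fin 1 → ℕ) => v 0 ∈ U i := by
  refine (exists_lt (2 ^ k) fun c => and (const (c.testBit i)) (hcolor c)).of_iff fun n v _ => ?_
  rw [← testBit_membershipColor U (v 0) i]
  exact ⟨fun h => ⟨_, membershipColor_lt U _, h, rfl⟩, fun ⟨_, _, h, hc⟩ => hc ▸ h⟩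

end MembershipColor

/-- Lemma 5.1: for every `k ≥ 1` and all unary relations
`U₁,...,U_k` on `ℕ` there is a strict linear order `◁'` on `ℕ` such that `◁` and all
the `Uᵢ` are `FO(<,◁')`-definable in every finite prefix; moreover, if all `Uᵢ` are
`FO(Bit)`-definable in every finite prefix, then `◁'` is as well. -/
theorem encode_ordc_and_unary_predicates_into_one_linear_order
    (k : ℕ) (hk : 1 ≤ k) (U : Fin k → Set ℕ) :
    ∃ ordb : ℕ → ℕ → Prop,
      (∀ x, ¬ ordb x x) ∧
      (∀ x y z, ordb x y → ordb y z → ordb x z) ∧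
      (∀ x y, x ≠ y → ordb x y ∨ ordb y x) ∧
      (∃ φ : LPair.Formula (Fin 2),
        ∀ n : ℕ,
          letI := pairStruct ordb n
          ∀ a b : Fin (n + 1), φ.Realize ![a, b] ↔ ordc (a : ℕ) (b : ℕ)) ∧
      (∀ i : Fin k, ∃ φ : LPair.Formula (Fin 1),
        ∀ n : ℕ,
          letI := pairStruct ordb n
          ∀ a : Fin (n + 1), φ.Realize ![a] ↔ (a : ℕ) ∈ U i) ∧
      ((∀ i : Fin k, ∃ ψ : LBit.Formula (Fin 1),
          ∀ n : ℕ,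
            letI := bitStruct n
            ∀ a : Fin (n + 1), ψ.Realize ![a] ↔ (a : ℕ) ∈ U i) →
        ∃ ψ : LBit.Formula (Fin 2),
          ∀ n : ℕ,
            letI := bitStruct n
            ∀ a b : Fin (n + 1), ψ.Realize ![a, b] ↔ ordb (a : ℕ) (b : ℕ)) := by
  have hlt := membershipColor_lt U
  refine ⟨encodingOrder (2 ^ k) (membershipColor U), encodingOrder_irrefl _ _,
    fun _ _ _ => encodingOrder_trans, fun _ _ => encodingOrder_total, ?_, fun i => ?_, fun hU => ?_⟩
  · exact iff_exists_formula₂.mp (prefixDefinable_encodingOrder_ordc 0 1 hlt)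
  · exact iff_exists_formula₁.mp (prefixDefinable_mem_of_membershipColor_eq U
      (fun c => prefixDefinable_encodingOrder_color_eq 0 hlt c) i)
  · have hcolor := prefixDefinable_membershipColor_eq U fun i =>
      (iff_exists_formula₁ (P := (· ∈ U i))).mpr (hU i)
    exact iff_exists_formula₂.mp (prefixDefinable_bitStruct_encodingOrder hlt hcolor 0 1)
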